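/- Under the standing assumptions, μ(B_H) ≤ C A⁻¹ μ(R₀), where C depends only on n, the AD-regularity constant C₀ and c', and ω^p(B_L) ≤ A⁻¹ ω^p(R₀). -/

import Mathlib

open Metric MeasureTheory Set Filter Topology

noncomputable section

/-- Euclidean space `ℝ^d`. -/
abbrev Euc (d : ℕ) : Type := EuclideanSpace ℝ (Fin d)

namespace HarmMeas

/-- Distance between two sets. -/
def setD {d : ℕ} (s t : Set (Euc d)) : ℝ := sInf (Set.image2 dist s t)

/-- A continuous function is subharmonic on `U` if it satisfies the sub-mean-value
property on every ball whose closure is contained in `U`. -/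
def SubharmonicOn {d : ℕ} (u : Euc d → ℝ) (U : Set (Euc d)) : Prop :=
  ContinuousOn u U ∧ ∀ x ∈ U, ∀ r : ℝ, 0 < r → closedBall x r ⊆ U →
    u x ≤ ⨍ y in ball x r, u y

/-- Harmonic (continuous) functions: both `u` and `-u` are subharmonic. -/
def HarmonicOnS {d : ℕ} (u : Euc d → ℝ) (U : Set (Euc d)) : Prop :=
  SubharmonicOn u U ∧ SubharmonicOn (fun y => -u y) U

/-- The upper (Perron) class associated to boundary data `f` on the open set `Ω`:
superharmonic functions on `Ω`, bounded below, whose liminf at each boundary point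
dominates `f` there. -/
def upperFamily {d : ℕ} (Ω : Set (Euc d)) (f : Euc d → ℝ) : Set (Euc d → ℝ) :=
  {u | SubharmonicOn (fun y => -u y) Ω ∧ BddBelow (u '' Ω) ∧
       ∀ ξ ∈ frontier Ω, f ξ ≤ Filter.liminf u (nhdsWithin ξ Ω)}

/-- The (upper) Perron solution of the Dirichlet problem in `Ω` with boundary data `f`,
evaluated at `p`. -/
def perron {d : ℕ} (Ω : Set (Euc d)) (f : Euc d → ℝ) (p : Euc d) : ℝ :=
  sInf ((fun u => u p) '' upperFamily Ω f)

/-- Harmonic measure `ω^p(A)` of `A` for the open set `Ω` with pole `p`: the value at `p`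
of the Perron solution with boundary data the characteristic function of `A`. -/
def hMeasure {d : ℕ} (Ω : Set (Euc d)) (p : Euc d) (A : Set (Euc d)) : ℝ :=
  perron Ω (A.indicator fun _ => 1) p

/-- The Green function `g(p,x)` of `Ω ⊆ ℝ^{n+1}` with pole `p`: the fundamental solution
`|x-p|^{1-n}` minus the Perron solution with the fundamental solution as boundary data. -/
def greenFn (n : ℕ) (Ω : Set (Euc (n+1))) (p x : Euc (n+1)) : ℝ :=
  ‖x - p‖ ^ ((1 : ℤ) - n) - perron Ω (fun ξ => ‖ξ - p‖ ^ ((1 : ℤ) - n)) x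

/-- `F ⊆ ℝ^{n+1}` is `n`-AD-regular with constant `C₀`. -/
def ADRegular (n : ℕ) (C₀ : ℝ) (F : Set (Euc (n+1))) : Prop :=
  ∀ x ∈ F, ∀ r : ℝ, 0 < r → ENNReal.ofReal r ≤ EMetric.diam F →
    ENNReal.ofReal (C₀⁻¹ * r ^ n) ≤ μH[n] (F ∩ ball x r) ∧
      μH[n] (F ∩ ball x r) ≤ ENNReal.ofReal (C₀ * r ^ n)

/-- A `λ`-carrot curve from `x` to `y` in `Ω`: a curve `γ ⊆ Ω ∪ {y}` with endpoints `x`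
and `y` such that `dist(z, ∂Ω) ≥ λ ⋅ ℋ¹(γ(y,z))` for every point `z = γ(t)` of the curve,
where `γ(y,z)` is the arc of `γ` between `y` and `z`. -/
def CarrotCurve {d : ℕ} (Ω : Set (Euc d)) (lam : ℝ) (x y : Euc d) : Prop :=
  ∃ γ : ℝ → Euc d, ContinuousOn γ (Icc 0 1) ∧ γ 0 = x ∧ γ 1 = y ∧
    γ '' Icc 0 1 ⊆ Ω ∪ {y} ∧
    ∀ t ∈ Icc (0:ℝ) 1,
      ENNReal.ofReal lam * μH[1] (γ '' Icc t 1) ≤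
        ENNReal.ofReal (infDist (γ t) (frontier Ω))

/-- A `C`-good Harnack chain from `x ∈ Ω` to `y ∈ cl Ω`, all of whose balls are moreover
contained in the set `W`: consecutive balls meet, each ball has radius comparable (with
constant `C`) to its distance to `∂Ω`, radii are quasi-monotone, and for each `t > 0`
there are at most `C` balls of radius in `(t, 2t]`.  If `y ∈ Ω` the chain is finite and
`y` lies in its last ball; if `y ∈ ∂Ω` the chain is infinite and the balls converge
to `y`. -/
def GoodChainIn {d : ℕ} (Ω W : Set (Euc d)) (C : ℝ) (x y : Euc d) : Prop :=
  (y ∈ Ω ∧ ∃ (N : ℕ) (c : ℕ → Euc d) (r : ℕ → ℝ),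
    x ∈ ball (c 0) (r 0) ∧ y ∈ ball (c N) (r N) ∧
    (∀ j ≤ N, 0 < r j ∧ ball (c j) (r j) ⊆ Ω ∩ W) ∧
    (∀ j < N, (ball (c j) (r j) ∩ ball (c (j+1)) (r (j+1))).Nonempty) ∧
    (∀ j ≤ N, C⁻¹ * setD (ball (c j) (r j)) (frontier Ω) ≤ r j ∧
      r j ≤ C * setD (ball (c j) (r j)) (frontier Ω)) ∧
    (∀ i j, i ≤ N → j ≤ N → i < j → r j ≤ C * r i) ∧
    (∀ t : ℝ, 0 < t →
      {j | j ≤ N ∧ t < r j ∧ r j ≤ 2 * t}.Finite ∧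
      (Nat.card {j | j ≤ N ∧ t < r j ∧ r j ≤ 2 * t} : ℝ) ≤ C))
  ∨ (y ∈ frontier Ω ∧ ∃ (c : ℕ → Euc d) (r : ℕ → ℝ),
    x ∈ ball (c 0) (r 0) ∧
    Filter.Tendsto (fun j => infDist y (ball (c j) (r j))) atTop (nhds 0) ∧
    (∀ j, 0 < r j ∧ ball (c j) (r j) ⊆ Ω ∩ W) ∧
    (∀ j, (ball (c j) (r j) ∩ ball (c (j+1)) (r (j+1))).Nonempty) ∧
    (∀ j, C⁻¹ * setD (ball (c j) (r j)) (frontier Ω) ≤ r j ∧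
      r j ≤ C * setD (ball (c j) (r j)) (frontier Ω)) ∧
    (∀ i j : ℕ, i < j → r j ≤ C * r i) ∧
    (∀ t : ℝ, 0 < t →
      {j | t < r j ∧ r j ≤ 2 * t}.Finite ∧
      (Nat.card {j | t < r j ∧ r j ≤ 2 * t} : ℝ) ≤ C))

/-- A `C`-good Harnack chain from `x` to `y`. -/
def GoodChain {d : ℕ} (Ω : Set (Euc d)) (C : ℝ) (x y : Euc d) : Prop :=
  GoodChainIn Ω Set.univ C x y


/-- The harmonic measure of the open set `Ω` satisfies the weak-`A∞` condition: for every
`ε₀ ∈ (0,1)` there is `δ₀ ∈ (0,1)` such that for every ball `B` centered on `∂Ω`, every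
pole `p ∈ Ω \ 4B` and every Borel `E ⊆ B ∩ ∂Ω`, `ℋⁿ(E) ≤ δ₀ ℋⁿ(B ∩ ∂Ω)` implies
`ω^p(E) ≤ ε₀ ω^p(2B)`. -/
def WeakAInfty (n : ℕ) (Ω : Set (Euc (n+1))) : Prop :=
  ∀ ε₀ ∈ Set.Ioo (0:ℝ) 1, ∃ δ₀ ∈ Set.Ioo (0:ℝ) 1,
    ∀ x₀ ∈ frontier Ω, ∀ r₀ : ℝ, 0 < r₀ →
      ∀ p ∈ Ω \ closedBall x₀ (4 * r₀),
        ∀ A : Set (Euc (n+1)), MeasurableSet A → A ⊆ ball x₀ r₀ ∩ frontier Ω →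
          μH[n] A ≤ ENNReal.ofReal δ₀ * μH[n] (ball x₀ r₀ ∩ frontier Ω) →
          hMeasure Ω p A ≤ ε₀ * hMeasure Ω p (ball x₀ (2 * r₀))

/-- `ω^p` satisfies the weak-`A∞` condition in the ball `B(x₀,r₀)`, with gauge `D`
(i.e. `δ₀ = D ε₀` is a witness for each `ε₀ ∈ (0,1)`). -/
def WeakAInftyBallWith (n : ℕ) (Ω : Set (Euc (n+1))) (p x₀ : Euc (n+1)) (r₀ : ℝ)
    (D : ℝ → ℝ) : Prop :=
  ∀ ε₀ ∈ Set.Ioo (0:ℝ) 1, D ε₀ ∈ Set.Ioo (0:ℝ) 1 ∧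
    ∀ A : Set (Euc (n+1)), MeasurableSet A → A ⊆ ball x₀ r₀ ∩ frontier Ω →
      μH[n] A ≤ ENNReal.ofReal (D ε₀) * μH[n] (ball x₀ r₀ ∩ frontier Ω) →
      hMeasure Ω p A ≤ ε₀ * hMeasure Ω p (ball x₀ (2 * r₀))

/-- The weak local John condition for `Ω ⊆ ℝ^{n+1}`: there are `λ, θ ∈ (0,1)` and `Λ ≥ 2`
such that every `x ∈ Ω` sees (through `λ`-carrot curves) a Borel subset `F` of
`B(x, Λ δ_Ω(x)) ∩ ∂Ω` of surface measure at least `θ ℋⁿ(B(x, Λ δ_Ω(x)) ∩ ∂Ω)`. -/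
def WeakLocalJohn (n : ℕ) (Ω : Set (Euc (n+1))) : Prop :=
  ∃ lam ∈ Set.Ioo (0:ℝ) 1, ∃ θ ∈ Set.Ioo (0:ℝ) 1, ∃ Λ : ℝ, 2 ≤ Λ ∧
    ∀ x ∈ Ω, ∃ F : Set (Euc (n+1)), MeasurableSet F ∧
      F ⊆ ball x (Λ * infDist x (frontier Ω)) ∩ frontier Ω ∧
      ENNReal.ofReal θ * μH[n] (ball x (Λ * infDist x (frontier Ω)) ∩ frontier Ω) ≤
        μH[n] F ∧
      ∀ y ∈ F, CarrotCurve Ω lam x y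

/-- The corkscrew condition for `Ω`. -/
def CorkscrewCond {d : ℕ} (Ω : Set (Euc d)) : Prop :=
  ∃ c > (0:ℝ), ∀ x ∈ frontier Ω, ∀ ρ : ℝ, 0 < ρ → ENNReal.ofReal ρ ≤ EMetric.diam Ω →
    ∃ (y : Euc d) (r : ℝ), c * ρ ≤ r ∧ ball y r ⊆ ball x ρ ∩ Ω

/-- `F ⊆ ℝ^{n+1}` is uniformly `n`-rectifiable, with AD-regularity constant `C₀` and
big-pieces-of-Lipschitz-images constants `θ`, `M`. -/
def UnifRectifiable (n : ℕ) (C₀ θ M : ℝ) (F : Set (Euc (n+1))) : Prop :=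
  ADRegular n C₀ F ∧ 0 < θ ∧ 0 < M ∧
    ∀ x ∈ F, ∀ r : ℝ, 0 < r → ENNReal.ofReal r ≤ EMetric.diam F →
      ∃ g : Euc n → Euc (n+1), LipschitzOnWith (Real.toNNReal M) g (ball 0 r) ∧
        ENNReal.ofReal (θ * r ^ n) ≤ μH[n] (F ∩ ball x r ∩ g '' ball 0 r)

/-- The set `WA(p,Λ)` of boundary points `x ∈ B(p, 10 δ_Ω(p)) ∩ ∂Ω` at which the harmonic
measure `ω^p` is comparable (with constant `Λ`) to the normalized surface measure
`μ(B(x,r))/μ(B(x,δ_Ω(p)))` at every scale `0 < r ≤ δ_Ω(p)`. -/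
def WAset (n : ℕ) (Ω : Set (Euc (n+1))) (p : Euc (n+1)) (Λ : ℝ) : Set (Euc (n+1)) :=
  {x | x ∈ ball p (10 * infDist p (frontier Ω)) ∩ frontier Ω ∧
    ∀ r : ℝ, 0 < r → r ≤ infDist p (frontier Ω) →
      Λ⁻¹ * ((μH[n] (frontier Ω ∩ ball x r)).toReal /
          (μH[n] (frontier Ω ∩ ball x (infDist p (frontier Ω)))).toReal) ≤
        hMeasure Ω p (ball x r) ∧
      hMeasure Ω p (ball x r) ≤
        Λ * ((μH[n] (frontier Ω ∩ ball x r)).toReal /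
          (μH[n] (frontier Ω ∩ ball x (infDist p (frontier Ω)))).toReal)}


/-- A David–Semmes dyadic lattice associated to a measure `μ` supported on the set `F`,
with comparability constant `Cl`: for each generation `j ∈ ℤ` a partition of `F` into
Borel "cubes" of side length `2^{-j}`, nested across generations, with
`diam Q ≤ ℓ(Q)`, `μ(Q) ≈ ℓ(Q)ⁿ`, centers deep inside the cubes, and small boundaries. -/
structure DSLattice (n : ℕ) (F : Set (Euc (n+1))) (μ : Measure (Euc (n+1))) (Cl : ℝ) where
  cube : ℤ → Set (Set (Euc (n+1)))
  center : Set (Euc (n+1)) → Euc (n+1)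
  one_le_Cl : 1 ≤ Cl
  subset_F : ∀ j, ∀ Q ∈ cube j, Q ⊆ F
  nonempty : ∀ j, ∀ Q ∈ cube j, Q.Nonempty
  measurableSet : ∀ j, ∀ Q ∈ cube j, MeasurableSet Q
  cover : ∀ j : ℤ, ENNReal.ofReal ((2:ℝ) ^ (-j)) ≤ EMetric.diam F →
    ∀ x ∈ F, ∃ Q ∈ cube j, x ∈ Q
  disj : ∀ j, ∀ Q ∈ cube j, ∀ Q' ∈ cube j, Q ≠ Q' → Disjoint Q Q'
  nested : ∀ j k : ℤ, k ≤ j → ∀ Q ∈ cube j, ∀ Q' ∈ cube k, (Q ∩ Q').Nonempty → Q ⊆ Q'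
  diam_le : ∀ j, ∀ Q ∈ cube j, EMetric.diam Q ≤ ENNReal.ofReal ((2:ℝ) ^ (-j))
  measure_lb : ∀ j, ∀ Q ∈ cube j, ENNReal.ofReal (Cl⁻¹ * ((2:ℝ) ^ (-j)) ^ n) ≤ μ Q
  measure_ub : ∀ j, ∀ Q ∈ cube j, μ Q ≤ ENNReal.ofReal (Cl * ((2:ℝ) ^ (-j)) ^ n)
  center_mem : ∀ j, ∀ Q ∈ cube j, center Q ∈ Q
  center_far : ∀ j, ∀ Q ∈ cube j, ∀ y ∈ F \ Q, Cl⁻¹ * (2:ℝ) ^ (-j) ≤ dist (center Q) y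
  small_boundary : ∀ j, ∀ Q ∈ cube j, ∀ τ : ℝ, 0 < τ → τ < 1 →
    μ {x ∈ Q | infDist x (F \ Q) ≤ τ * (2:ℝ) ^ (-j)} +
        μ {x ∈ F \ Q | infDist x Q ≤ τ * (2:ℝ) ^ (-j)} ≤
      ENNReal.ofReal (Cl * τ ^ (1 / Cl) * ((2:ℝ) ^ (-j)) ^ n)

/-- A cube of the lattice, recorded together with its generation. -/
abbrev Cube (n : ℕ) : Type := ℤ × Set (Euc (n+1))

/-- Membership of a (generation, cube) pair in the lattice. -/
def DSLattice.mem {n : ℕ} {F : Set (Euc (n+1))} {μ : Measure (Euc (n+1))} {Cl : ℝ}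
    (L : DSLattice n F μ Cl) (q : Cube n) : Prop := q.2 ∈ L.cube q.1

/-- Side length `ℓ(Q) = 2^{-j}` of a cube of generation `j`. -/
def sideLen {n : ℕ} (q : Cube n) : ℝ := (2:ℝ) ^ (-q.1)

/-- The ball `t·B_Q = B(z_Q, t · 4 ℓ(Q))` associated to the cube `q`. -/
def cubeBall {n : ℕ} {F : Set (Euc (n+1))} {μ : Measure (Euc (n+1))} {Cl : ℝ}
    (L : DSLattice n F μ Cl) (t : ℝ) (q : Cube n) : Set (Euc (n+1)) :=
  ball (L.center q.2) (t * (4 * sideLen q))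

/-- The dilated cube `λQ = {x ∈ F : dist(x,Q) ≤ (λ-1) ℓ(Q)}`. -/
def dilCube {n : ℕ} (F : Set (Euc (n+1))) (lam : ℝ) (q : Cube n) : Set (Euc (n+1)) :=
  {x ∈ F | infDist x q.2 ≤ (lam - 1) * sideLen q}

/-- The bilateral beta coefficient `bβ_F(B(x,r))`: infimum over affine `n`-planes `L`
meeting `B(x,r)` of `r⁻¹ (sup_{y ∈ F ∩ B} dist(y,L) + sup_{y ∈ L ∩ B} dist(y,F))`. -/
def bbeta (n : ℕ) (F : Set (Euc (n+1))) (x : Euc (n+1)) (r : ℝ) : ℝ :=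
  sInf {t | ∃ L : AffineSubspace ℝ (Euc (n+1)),
    Module.finrank ℝ L.direction = n ∧ ((L : Set (Euc (n+1))) ∩ ball x r).Nonempty ∧
    t = r⁻¹ * ((⨆ y ∈ F ∩ ball x r, infDist y (L : Set (Euc (n+1)))) +
      ⨆ y ∈ (L : Set (Euc (n+1))) ∩ ball x r, infDist y F)}

/-- `q` belongs to `D_μ(R)`: a lattice cube contained in `R` of generation at least that
of `R`. -/
def InD {n : ℕ} {F : Set (Euc (n+1))} {μ : Measure (Euc (n+1))} {Cl : ℝ}
    (L : DSLattice n F μ Cl) (R q : Cube n) : Prop :=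
  L.mem q ∧ q.2 ⊆ R.2 ∧ R.1 ≤ q.1

section Corona
variable {n : ℕ} {F : Set (Euc (n+1))} {μ : Measure (Euc (n+1))} {Cl : ℝ}

/-- The harmonic-measure density `ω^p(λQ)/μ(λQ)` of the dilated cube `λQ`. -/
def dens (Ω : Set (Euc (n+1))) (μ : Measure (Euc (n+1))) (p : Euc (n+1)) (lam : ℝ)
    (q : Cube n) : ℝ :=
  hMeasure Ω p (dilCube (frontier Ω) lam q) / (μ (dilCube (frontier Ω) lam q)).toReal

/-- Being a high density cube (before maximality): `ω^p(2Q)/μ(2Q) ≥ A ω^p(2R₀)/μ(2R₀)`. -/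
def HDcond (Ω : Set (Euc (n+1))) (μ : Measure (Euc (n+1))) (L : DSLattice n F μ Cl)
    (p : Euc (n+1)) (R₀ : Cube n) (A : ℝ) (q : Cube n) : Prop :=
  L.mem q ∧ q.2 ⊆ R₀.2 ∧ A * dens Ω μ p 2 R₀ ≤ dens Ω μ p 2 q

/-- Being a low density cube (before maximality): `ω^p(Q)/μ(Q) ≤ A⁻¹ ω^p(R₀)/μ(R₀)`. -/
def LDcond (Ω : Set (Euc (n+1))) (μ : Measure (Euc (n+1))) (L : DSLattice n F μ Cl)
    (p : Euc (n+1)) (R₀ : Cube n) (A : ℝ) (q : Cube n) : Prop :=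
  L.mem q ∧ q.2 ⊆ R₀.2 ∧
    hMeasure Ω p q.2 / (μ q.2).toReal ≤ A⁻¹ * (hMeasure Ω p R₀.2 / (μ R₀.2).toReal)

/-- Maximal cubes of the lattice satisfying a given property. -/
def MaximalWith (L : DSLattice n F μ Cl) (P : Cube n → Prop) (q : Cube n) : Prop :=
  P q ∧ ∀ q' : Cube n, L.mem q' → q'.1 < q.1 → q.2 ⊆ q'.2 → ¬ P q'

/-- The family `HD` of maximal high density cubes contained in `R₀`. -/
def HDfam (Ω : Set (Euc (n+1))) (μ : Measure (Euc (n+1))) (L : DSLattice n F μ Cl)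
    (p : Euc (n+1)) (R₀ : Cube n) (A : ℝ) : Set (Cube n) :=
  {q | MaximalWith L (HDcond Ω μ L p R₀ A) q}

/-- The family `LD` of maximal low density cubes contained in `R₀`. -/
def LDfam (Ω : Set (Euc (n+1))) (μ : Measure (Euc (n+1))) (L : DSLattice n F μ Cl)
    (p : Euc (n+1)) (R₀ : Cube n) (A : ℝ) : Set (Cube n) :=
  {q | MaximalWith L (LDcond Ω μ L p R₀ A) q}

/-- `B_H`, the union of the high density cubes. -/
def BHset (Ω : Set (Euc (n+1))) (μ : Measure (Euc (n+1))) (L : DSLattice n F μ Cl)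
    (p : Euc (n+1)) (R₀ : Cube n) (A : ℝ) : Set (Euc (n+1)) :=
  ⋃ q ∈ HDfam Ω μ L p R₀ A, q.2

/-- `B_L`, the union of the low density cubes. -/
def BLset (Ω : Set (Euc (n+1))) (μ : Measure (Euc (n+1))) (L : DSLattice n F μ Cl)
    (p : Euc (n+1)) (R₀ : Cube n) (A : ℝ) : Set (Euc (n+1)) :=
  ⋃ q ∈ LDfam Ω μ L p R₀ A, q.2

/-- The family `G` of cubes of `D_μ(R₀)` not contained in any high or low density cube. -/
def Gfam (Ω : Set (Euc (n+1))) (μ : Measure (Euc (n+1))) (L : DSLattice n F μ Cl)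
    (p : Euc (n+1)) (R₀ : Cube n) (A : ℝ) : Set (Cube n) :=
  {q | InD L R₀ q ∧
    ∀ q' ∈ HDfam Ω μ L p R₀ A ∪ LDfam Ω μ L p R₀ A, ¬ q.2 ⊆ q'.2}

/-- `bβ(Q) := bβ_{∂Ω}(100 B_Q)`. -/
def bbetaQ (n : ℕ) {F : Set (Euc (n+1))} {μ : Measure (Euc (n+1))} {Cl : ℝ}
    (L : DSLattice n F μ Cl) (G : Set (Euc (n+1))) (q : Cube n) : ℝ :=
  bbeta n G (L.center q.2) (100 * (4 * sideLen q))

/-- `q'` is the dyadic parent of `q`. -/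
def IsParent (L : DSLattice n F μ Cl) (q' q : Cube n) : Prop :=
  L.mem q' ∧ q'.1 = q.1 - 1 ∧ q.2 ⊆ q'.2

/-- The stopping condition for the corona decomposition: `Q ∉ G` or `bβ(Q̂) > ε`. -/
def StopBad (Ω : Set (Euc (n+1))) (μ : Measure (Euc (n+1))) (L : DSLattice n F μ Cl)
    (p : Euc (n+1)) (R₀ : Cube n) (A ε : ℝ) (q : Cube n) : Prop :=
  q ∉ Gfam Ω μ L p R₀ A ∨ ∃ q', IsParent L q' q ∧ ε < bbetaQ n L (frontier Ω) q'

/-- `Stop(R)`: the maximal cubes of `D_μ(R) \ {R}` satisfying the stopping condition. -/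
def StopFam (Ω : Set (Euc (n+1))) (μ : Measure (Euc (n+1))) (L : DSLattice n F μ Cl)
    (p : Euc (n+1)) (R₀ : Cube n) (A ε : ℝ) (R : Cube n) : Set (Cube n) :=
  {q | L.mem q ∧ q.2 ⊆ R.2 ∧ R.1 < q.1 ∧ StopBad Ω μ L p R₀ A ε q ∧
    ∀ q' : Cube n, L.mem q' → q'.2 ⊆ R.2 → R.1 < q'.1 → q'.1 < q.1 → q.2 ⊆ q'.2 →
      ¬ StopBad Ω μ L p R₀ A ε q'}

/-- `Tree(R)`: the cubes of `D_μ(R)` not contained in any cube from `Stop(R)`. -/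
def TreeFam (Ω : Set (Euc (n+1))) (μ : Measure (Euc (n+1))) (L : DSLattice n F μ Cl)
    (p : Euc (n+1)) (R₀ : Cube n) (A ε : ℝ) (R : Cube n) : Set (Cube n) :=
  {q | InD L R q ∧ ∀ s ∈ StopFam Ω μ L p R₀ A ε R, ¬ q.2 ⊆ s.2}

/-- The generations `Top_k` of the corona decomposition. -/
def TopFam (Ω : Set (Euc (n+1))) (μ : Measure (Euc (n+1))) (L : DSLattice n F μ Cl)
    (p : Euc (n+1)) (R₀ : Cube n) (A ε : ℝ) : ℕ → Set (Cube n)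
  | 0 => {q | q ∈ Gfam Ω μ L p R₀ A ∧ q.1 = R₀.1 + 10}
  | (k+1) => {q | ∃ R ∈ TopFam Ω μ L p R₀ A ε k,
      q ∈ StopFam Ω μ L p R₀ A ε R ∧ q ∈ Gfam Ω μ L p R₀ A}

/-- `Top := ⋃_k Top_k`. -/
def TopAll (Ω : Set (Euc (n+1))) (μ : Measure (Euc (n+1))) (L : DSLattice n F μ Cl)
    (p : Euc (n+1)) (R₀ : Cube n) (A ε : ℝ) : Set (Cube n) :=
  {q | ∃ k : ℕ, q ∈ TopFam Ω μ L p R₀ A ε k}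

/-- `Tree^{(N)}(R)`: cubes of `Tree(R)` of side length larger than `2^{-N} ℓ(R₀)`. -/
def TreeN (Ω : Set (Euc (n+1))) (μ : Measure (Euc (n+1))) (L : DSLattice n F μ Cl)
    (p : Euc (n+1)) (R₀ : Cube n) (A ε : ℝ) (N : ℕ) (R : Cube n) : Set (Cube n) :=
  {q | q ∈ TreeFam Ω μ L p R₀ A ε R ∧ q.1 < R₀.1 + N}

/-- `Top_b^{(N)}`: the cubes `R` of `Top` of side length larger than `2^{-N} ℓ(R₀)` with
`Tree(R) ≠ {R}`. -/
def TopbN (Ω : Set (Euc (n+1))) (μ : Measure (Euc (n+1))) (L : DSLattice n F μ Cl)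
    (p : Euc (n+1)) (R₀ : Cube n) (A ε : ℝ) (N : ℕ) : Set (Cube n) :=
  {R | R ∈ TopAll Ω μ L p R₀ A ε ∧ R.1 < R₀.1 + N ∧
    ∃ q ∈ TreeFam Ω μ L p R₀ A ε R, q ≠ R}

end Corona

/-!
**Low density.** The maximal low density cubes are pairwise disjoint, and each satisfies
`ω(Q) ≤ A⁻¹ (ω(R₀) / μ(R₀)) μ(Q)`, so summing gives `ω(B_L) ≤ A⁻¹ ω(R₀)`. The upper Perron
envelope `ω` is only finitely subadditive by construction; the sum over infinitely many cubes is
legitimate because the union of all but finitely many of them has small `μ`-measure, hence small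
harmonic measure by the weak-`A_∞` condition.

**High density.** A Vitali subfamily of the maximal high density cubes has disjoint balls
`B(z_Q, 4ℓ(Q))` and dilates covering `B_H`. Since `ω(2Q) ≥ A (ω(2R₀) / μ(2R₀)) μ(2Q)` with
`ω(2R₀) ≥ c'`, upper regularity reduces the estimate to `∑ ω(2Q) ≤ 1` over the subfamily. This
superadditivity is not automatic for upper envelopes: it is proved by placing between the
indicators of `2Q` and `B(z_Q, 4ℓ(Q))` a cutoff whose upper and lower envelopes agree. Such a cutoff
is a difference of truncations of the superharmonic function `(r² + |x - z|²)^{-1/2}`; a bounded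
superharmonic function on the whole space lies in its own upper class, and Perron's theorem makes
its upper envelope a member of its own lower class. Comparing the two classes requires the minimum
principle at the pole, which could fail only for `ω = 0` and hence holds because `ω(R₀) > 0`.
-/

section BallAverages

variable {E : Type*} [NormedAddCommGroup E] [InnerProductSpace ℝ E] [FiniteDimensional ℝ E]
  [MeasurableSpace E] [BorelSpace E] {u v : E → ℝ} {x : E} {r a : ℝ}

lemma volume_real_ball_pos (x : E) (hr : 0 < r) : 0 < volume.real (ball x r) :=
  ENNReal.toReal_pos (measure_ball_pos _ _ hr).ne' measure_ball_lt_top.ne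

lemma integrableOn_ball (hv : ContinuousOn v (closedBall x r)) : IntegrableOn v (ball x r) :=
  (hv.integrableOn_compact (isCompact_closedBall x r)).mono_set ball_subset_closedBall

lemma le_setAverage_ball_iff (v : E → ℝ) (x : E) (hr : 0 < r) :
    a ≤ ⨍ y in ball x r, v y ↔ a * volume.real (ball x r) ≤ ∫ y in ball x r, v y := by
  rw [setAverage_eq, smul_eq_mul, ← div_eq_inv_mul, le_div_iff₀ (volume_real_ball_pos x hr)]

lemma setIntegral_ball_eq_mul_setAverage (v : E → ℝ) (x : E) (hr : 0 < r) :
    ∫ y in ball x r, v y = (⨍ y in ball x r, v y) * volume.real (ball x r) := by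
  rw [setAverage_eq, smul_eq_mul]
  field_simp [(volume_real_ball_pos x hr).ne']

lemma setAverage_ball_mono (hu : ContinuousOn u (closedBall x r))
    (hv : ContinuousOn v (closedBall x r)) (h : ∀ y ∈ ball x r, u y ≤ v y) :
    ⨍ y in ball x r, u y ≤ ⨍ y in ball x r, v y := by
  rw [setAverage_eq, setAverage_eq]
  exact mul_le_mul_of_nonneg_left
    (setIntegral_mono_on (integrableOn_ball hu) (integrableOn_ball hv) measurableSet_ball h)
    (inv_nonneg.2 measureReal_nonneg)

lemma setAverage_ball_add (hu : ContinuousOn u (closedBall x r))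
    (hv : ContinuousOn v (closedBall x r)) :
    ⨍ y in ball x r, (u y + v y) = (⨍ y in ball x r, u y) + ⨍ y in ball x r, v y := by
  simp only [setAverage_eq, integral_add (integrableOn_ball hu) (integrableOn_ball hv), smul_add]

lemma setAverage_ball_sub (hu : ContinuousOn u (closedBall x r))
    (hv : ContinuousOn v (closedBall x r)) :
    ⨍ y in ball x r, (u y - v y) = (⨍ y in ball x r, u y) - ⨍ y in ball x r, v y := by
  simp only [setAverage_eq, integral_sub (integrableOn_ball hu) (integrableOn_ball hv), smul_sub]

lemma setAverage_ball_neg (v : E → ℝ) (x : E) (r : ℝ) :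
    ⨍ y in ball x r, -v y = -⨍ y in ball x r, v y := by
  simp only [setAverage_eq, integral_neg, smul_neg]

lemma setAverage_ball_const_mul (c : ℝ) (v : E → ℝ) (x : E) (r : ℝ) :
    ⨍ y in ball x r, c * v y = c * ⨍ y in ball x r, v y := by
  simp only [setAverage_eq, integral_const_mul, smul_eq_mul, mul_left_comm]

lemma setAverage_ball_const (c : ℝ) (x : E) (hr : 0 < r) : ⨍ _ in ball x r, c = c :=
  setAverage_const (measure_ball_pos _ _ hr).ne' measure_ball_lt_top.ne c

lemma abs_setAverage_ball_sub_le (hr : 0 < r) (hu : ContinuousOn u (closedBall x r))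
    (hv : ContinuousOn v (closedBall x r)) (h : ∀ y ∈ ball x r, |u y - v y| ≤ a) :
    |(⨍ y in ball x r, u y) - ⨍ y in ball x r, v y| ≤ a := by
  rw [← setAverage_ball_sub hu hv, abs_le]
  constructor
  · rw [← setAverage_ball_const (-a) x hr]
    exact setAverage_ball_mono continuousOn_const (hu.sub hv) fun y hy => (abs_le.1 (h y hy)).1
  · rw [← setAverage_ball_const a x hr]
    exact setAverage_ball_mono (hu.sub hv) continuousOn_const fun y hy => (abs_le.1 (h y hy)).2

lemma setAverage_ball_eq_setAverage_unitBall (u : E → ℝ) (x : E) (hr : 0 < r) :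
    ⨍ y in ball x r, u y = ⨍ y in ball (0 : E) 1, u (x + r • y) := by
  have htranslate : ∫ y in ball (0 : E) r, u (x + y) = ∫ y in ball x r, u y := by
    have h := (measurePreserving_add_left (volume : Measure E) x).setIntegral_preimage_emb
      (measurableEmbedding_addLeft x) u (ball x r)
    simpa using h
  have hscale := Measure.setIntegral_comp_smul_of_pos volume (fun y : E => u (x + y)) (ball 0 1) hr
  rw [smul_unitBall_of_pos hr, htranslate] at hscale
  have hvol : volume.real (ball x r) = r ^ Module.finrank ℝ E * volume.real (ball (0 : E) 1) := by
    rw [measureReal_def, Measure.addHaar_ball_of_pos _ _ hr, ENNReal.toReal_mul,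
      ENNReal.toReal_ofReal (by positivity), measureReal_def]
  rw [setAverage_eq, setAverage_eq, hvol, hscale, mul_inv, smul_smul, mul_comm]

lemma eqOn_ball_of_le_setAverage (hr : 0 < r) (hv : ContinuousOn v (closedBall x r))
    (hle : ∀ y ∈ ball x r, v y ≤ a) (ha : a ≤ ⨍ y in ball x r, v y) :
    ∀ y ∈ ball x r, v y = a := by
  have hc : ContinuousOn (fun y => a - v y) (closedBall x r) := continuousOn_const.sub hv
  have hnonneg : ∀ y ∈ ball x r, 0 ≤ a - v y := fun y hy => sub_nonneg.2 (hle y hy)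
  have hzero : ∫ y in ball x r, (a - v y) = 0 := by
    refine le_antisymm ?_ (setIntegral_nonneg measurableSet_ball hnonneg)
    rw [le_setAverage_ball_iff _ _ hr] at ha
    rw [integral_sub (integrableOn_ball continuousOn_const) (integrableOn_ball hv),
      setIntegral_const, smul_eq_mul]
    linarith
  rw [setIntegral_eq_zero_iff_of_nonneg_ae (ae_restrict_of_forall_mem measurableSet_ball hnonneg)
    (integrableOn_ball hc)] at hzero
  intro y hy
  have := Measure.eqOn_open_of_ae_eq hzero isOpen_ball (hc.mono ball_subset_closedBall)
    continuousOn_const hy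
  exact (sub_eq_zero.1 this).symm

end BallAverages

section MeanValueInequality

variable {E : Type*} [NormedAddCommGroup E]

open scoped RealInnerProductSpace Laplacian

/-- The Lipschitz weight `(1 - ‖y‖²)⁺`. Its gradient on the unit ball is `-2 y`, so integrating
by parts against it turns radial derivatives into second derivatives. -/
def unitBallWeight (y : E) : ℝ := 1 - min ‖y‖ 1 ^ 2

lemma unitBallWeight_of_norm_le_one {y : E} (hy : ‖y‖ ≤ 1) : unitBallWeight y = 1 - ‖y‖ ^ 2 := by
  rw [unitBallWeight, min_eq_left hy]

lemma unitBallWeight_of_one_le_norm {y : E} (hy : 1 ≤ ‖y‖) : unitBallWeight y = 0 := by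
  rw [unitBallWeight, min_eq_right hy, one_pow, sub_self]

lemma lipschitzWith_unitBallWeight : LipschitzWith 2 (unitBallWeight : E → ℝ) := by
  refine LipschitzWith.of_dist_le_mul fun y z => ?_
  have hmin : |min ‖y‖ 1 - min ‖z‖ 1| ≤ dist y z := by
    have := abs_min_sub_min_le_max ‖y‖ 1 ‖z‖ 1
    rw [dist_eq_norm]
    exact (this.trans (by simp)).trans (abs_norm_sub_norm_le y z)
  have hadd : |min ‖y‖ 1 + min ‖z‖ 1| ≤ 2 := by
    rw [abs_of_nonneg (by positivity)]
    linarith [min_le_right ‖y‖ 1, min_le_right ‖z‖ 1]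
  calc dist (unitBallWeight y) (unitBallWeight z)
      = |min ‖y‖ 1 + min ‖z‖ 1| * |min ‖y‖ 1 - min ‖z‖ 1| := by
        rw [Real.dist_eq, ← abs_mul, ← abs_neg, unitBallWeight, unitBallWeight]; ring_nf
    _ ≤ 2 * dist y z := by gcongr

lemma hasCompactSupport_unitBallWeight [ProperSpace E] :
    HasCompactSupport (unitBallWeight : E → ℝ) :=
  HasCompactSupport.intro (isCompact_closedBall 0 1) fun y hy => by
    rw [mem_closedBall_zero_iff, not_le] at hy
    exact unitBallWeight_of_one_le_norm hy.le

variable [InnerProductSpace ℝ E]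

lemma lineDeriv_unitBallWeight_of_norm_lt_one {y : E} (hy : ‖y‖ < 1) (e : E) :
    lineDeriv ℝ unitBallWeight y e = -(2 * ⟪y, e⟫) := by
  have heq : unitBallWeight =ᶠ[𝓝 y] fun z => 1 - ‖z‖ ^ 2 := by
    filter_upwards [(isOpen_lt continuous_norm continuous_const).mem_nhds hy] with z hz
    exact unitBallWeight_of_norm_le_one hz.le
  have hderiv := ((hasStrictFDerivAt_norm_sq y).hasFDerivAt.const_sub 1).hasLineDerivAt e
  rw [heq.lineDeriv_eq, hderiv.lineDeriv]
  simp

lemma lineDeriv_unitBallWeight_of_one_lt_norm {y : E} (hy : 1 < ‖y‖) (e : E) :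
    lineDeriv ℝ unitBallWeight y e = 0 := by
  have heq : unitBallWeight =ᶠ[𝓝 y] fun _ => 0 := by
    filter_upwards [(isOpen_lt continuous_const continuous_norm).mem_nhds hy] with z hz
    exact unitBallWeight_of_one_le_norm hz.le
  rw [heq.lineDeriv_eq, lineDeriv, deriv_const]

variable [FiniteDimensional ℝ E] {u : E → ℝ}

lemma laplacian_eq_sum_fderiv_fderiv {ι : Type*} [Fintype ι] (hu : ContDiff ℝ 2 u)
    (b : OrthonormalBasis ι ℝ E) (x : E) :
    Δ u x = ∑ i, fderiv ℝ (fun y => fderiv ℝ u y (b i)) x (b i) := by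
  rw [congrFun (InnerProductSpace.laplacian_eq_iteratedFDeriv_orthonormalBasis u b) x]
  refine Finset.sum_congr rfl fun i _ => ?_
  have hdiff : DifferentiableAt ℝ (fderiv ℝ u) x :=
    (hu.fderiv_right (m := 1) (by norm_num)).differentiable one_ne_zero x
  rw [iteratedFDeriv_two_apply, fderiv_clm_apply hdiff (differentiableAt_const _)]
  simp

variable [MeasurableSpace E] [BorelSpace E]

lemma integral_lineDeriv_unitBallWeight_mul [Nontrivial E] (f : E → ℝ) (e : E) :
    ∫ y, lineDeriv ℝ unitBallWeight y e * f y = ∫ y in ball (0 : E) 1, -(2 * ⟪y, e⟫) * f y := by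
  rw [← setIntegral_eq_integral_of_ae_compl_eq_zero (s := ball (0 : E) 1)]
  · refine setIntegral_congr_fun measurableSet_ball fun y hy => ?_
    rw [lineDeriv_unitBallWeight_of_norm_lt_one (mem_ball_zero_iff.1 hy)]
  · have hsphere : ∀ᵐ y : E, y ∉ sphere (0 : E) 1 :=
      measure_eq_zero_iff_ae_notMem.1 (Measure.addHaar_sphere volume 0 1)
    filter_upwards [hsphere] with y hy hball
    rw [mem_sphere_zero_iff_norm] at hy
    rw [mem_ball_zero_iff, not_lt] at hball
    rw [lineDeriv_unitBallWeight_of_one_lt_norm (hball.lt_of_ne' hy), zero_mul]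

lemma setIntegral_unitBall_two_mul_inner_mul [Nontrivial E] {G : E → ℝ} (hG : ContDiff ℝ 1 G)
    (e : E) :
    ∫ y in ball (0 : E) 1, 2 * ⟪y, e⟫ * G y =
      ∫ y in ball (0 : E) 1, (1 - ‖y‖ ^ 2) * fderiv ℝ G y e := by
  let χ : ContDiffBump (0 : E) := ⟨2, 3, by norm_num, by norm_num⟩
  let f : E → ℝ := fun y => χ y * G y
  have hf_eq : ∀ y ∈ ball (0 : E) 1, f =ᶠ[𝓝 y] G := fun y hy => by
    filter_upwards [isOpen_ball.mem_nhds hy] with z hz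
    have hχ : χ z = 1 := χ.one_of_mem_closedBall
      (closedBall_subset_closedBall one_le_two (ball_subset_closedBall hz))
    simp only [f, hχ, one_mul]
  obtain ⟨C, hC⟩ := (χ.contDiff.mul hG).lipschitzWith_of_hasCompactSupport
    χ.hasCompactSupport.mul_right one_ne_zero
  calc ∫ y in ball (0 : E) 1, 2 * ⟪y, e⟫ * G y
      = ∫ y in ball (0 : E) 1, -(2 * ⟪y, -e⟫) * f y :=
        setIntegral_congr_fun measurableSet_ball fun y hy => by
          simp only [(hf_eq y hy).eq_of_nhds, inner_neg_right, mul_neg, neg_neg]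
    _ = ∫ y, lineDeriv ℝ unitBallWeight y (-e) * f y :=
        (integral_lineDeriv_unitBallWeight_mul f (-e)).symm
    _ = ∫ y, lineDeriv ℝ f y e * unitBallWeight y :=
        (hC.integral_lineDeriv_mul_eq lipschitzWith_unitBallWeight
          hasCompactSupport_unitBallWeight e).symm
    _ = ∫ y in ball (0 : E) 1, lineDeriv ℝ f y e * unitBallWeight y :=
        (setIntegral_eq_integral_of_forall_compl_eq_zero fun y hy => by
          rw [unitBallWeight_of_one_le_norm (by simpa using hy), mul_zero]).symm
    _ = ∫ y in ball (0 : E) 1, (1 - ‖y‖ ^ 2) * fderiv ℝ G y e :=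
        setIntegral_congr_fun measurableSet_ball fun y hy => by
          rw [(hf_eq y hy).lineDeriv_eq, unitBallWeight_of_norm_le_one (mem_ball_zero_iff.1 hy).le,
            (hG.differentiable one_ne_zero y).lineDeriv_eq_fderiv, mul_comm]

lemma two_mul_setIntegral_unitBall_fderiv_radial [Nontrivial E] (hu : ContDiff ℝ 2 u) (x : E)
    (t : ℝ) :
    2 * ∫ y in ball (0 : E) 1, fderiv ℝ u (x + t • y) y =
      t * ∫ y in ball (0 : E) 1, (1 - ‖y‖ ^ 2) * Δ u (x + t • y) := by
  let b := stdOrthonormalBasis ℝ E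
  have hdu : ContDiff ℝ 1 (fderiv ℝ u) := hu.fderiv_right (by norm_num)
  have hdir : ∀ e, ContDiff ℝ 1 fun y => fderiv ℝ u y e := fun e => hdu.clm_apply contDiff_const
  have hcont : ∀ e, Continuous fun y => fderiv ℝ (fun z => fderiv ℝ u z e) y e := fun e =>
    ((hdir e).continuous_fderiv one_ne_zero).clm_apply continuous_const
  have hexpand : ∀ y, 2 * fderiv ℝ u (x + t • y) y =
      ∑ i, 2 * ⟪y, b i⟫ * fderiv ℝ u (x + t • y) (b i) := fun y => by
    have hsum := congrArg (fderiv ℝ u (x + t • y)) (b.sum_repr' y)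
    rw [← hsum]
    simp only [map_sum, map_smul, smul_eq_mul, Finset.mul_sum, real_inner_comm, mul_assoc]
  have hchain : ∀ (e y : E), fderiv ℝ (fun z => fderiv ℝ u (x + t • z) e) y e =
      t * fderiv ℝ (fun z => fderiv ℝ u z e) (x + t • y) e := fun e y => by
    have haff : HasFDerivAt (fun z : E => x + t • z) (t • ContinuousLinearMap.id ℝ E) y :=
      ((hasFDerivAt_id y).const_smul t).const_add x
    have hcomp := ((hdir e).differentiable one_ne_zero (x + t • y)).hasFDerivAt.comp y haff
    rw [Function.comp_def] at hcomp
    simp [hcomp.fderiv]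
  calc 2 * ∫ y in ball (0 : E) 1, fderiv ℝ u (x + t • y) y
      = ∑ i, ∫ y in ball (0 : E) 1, 2 * ⟪y, b i⟫ * fderiv ℝ u (x + t • y) (b i) := by
        rw [← integral_const_mul]
        simp only [hexpand]
        refine integral_finsetSum _ fun i _ => integrableOn_ball (Continuous.continuousOn ?_)
        have := (hdir (b i)).continuous
        fun_prop
    _ = ∑ i, ∫ y in ball (0 : E) 1,
          t * ((1 - ‖y‖ ^ 2) * fderiv ℝ (fun z => fderiv ℝ u z (b i)) (x + t • y) (b i)) := by
        refine Finset.sum_congr rfl fun i _ => ?_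
        have hG : ContDiff ℝ 1 fun y => fderiv ℝ u (x + t • y) (b i) :=
          (hdir (b i)).comp (by fun_prop)
        simp only [setIntegral_unitBall_two_mul_inner_mul hG, hchain, mul_left_comm]
    _ = t * ∫ y in ball (0 : E) 1, (1 - ‖y‖ ^ 2) * Δ u (x + t • y) := by
        simp only [laplacian_eq_sum_fderiv_fderiv hu b, Finset.mul_sum, integral_const_mul]
        rw [integral_finsetSum, Finset.mul_sum]
        intro i _
        have := hcont (b i)
        exact integrableOn_ball (Continuous.continuousOn (by fun_prop))

lemma hasDerivAt_setIntegral_unitBall_comp_add_smul (hu : ContDiff ℝ 1 u) (x : E) (t : ℝ) :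
    HasDerivAt (fun s : ℝ => ∫ y in ball (0 : E) 1, u (x + s • y))
      (∫ y in ball (0 : E) 1, fderiv ℝ u (x + t • y) y) t := by
  have huc := hu.continuous
  have hcont : Continuous fun q : ℝ × E => fderiv ℝ u (x + q.1 • q.2) q.2 :=
    ((hu.continuous_fderiv one_ne_zero).comp (by fun_prop)).clm_apply continuous_snd
  obtain ⟨C, hC⟩ := ((isCompact_closedBall t 1).prod
    (isCompact_closedBall (0 : E) 1)).exists_bound_of_continuousOn hcont.continuousOn
  refine (hasDerivAt_integral_of_dominated_loc_of_deriv_le (ball_mem_nhds t one_pos)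
    (F' := fun s y => fderiv ℝ u (x + s • y) y) (bound := fun _ => C)
    (Eventually.of_forall fun s => Continuous.aestronglyMeasurable (by fun_prop))
    (integrableOn_ball (Continuous.continuousOn (by fun_prop)))
    (hcont.comp (Continuous.prodMk_right t)).aestronglyMeasurable
    (ae_restrict_of_forall_mem measurableSet_ball fun y hy s hs =>
      hC (s, y) ⟨ball_subset_closedBall hs, ball_subset_closedBall hy⟩)
    (integrableOn_ball continuousOn_const) (Eventually.of_forall fun y s _ => ?_)).2
  have haff : HasDerivAt (fun s : ℝ => x + s • y) y s := by
    simpa using ((hasDerivAt_id s).smul_const y).const_add x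
  exact (hu.differentiable one_ne_zero (x + s • y)).hasFDerivAt.comp_hasDerivAt s haff

theorem le_setAverage_ball_of_laplacian_nonneg [Nontrivial E] (hu : ContDiff ℝ 2 u)
    (hΔ : ∀ y, 0 ≤ Δ u y) (x : E) {r : ℝ} (hr : 0 < r) : u x ≤ ⨍ y in ball x r, u y := by
  have hderiv := hasDerivAt_setIntegral_unitBall_comp_add_smul (hu.of_le one_le_two) x
  have hderiv_nonneg : ∀ t : ℝ, 0 < t → 0 ≤ ∫ y in ball (0 : E) 1, fderiv ℝ u (x + t • y) y := by
    intro t ht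
    have hint : 0 ≤ ∫ y in ball (0 : E) 1, (1 - ‖y‖ ^ 2) * Δ u (x + t • y) :=
      setIntegral_nonneg measurableSet_ball fun y hy => mul_nonneg
        (sub_nonneg.2 (pow_le_one₀ (norm_nonneg y) (mem_ball_zero_iff.1 hy).le)) (hΔ _)
    have := two_mul_setIntegral_unitBall_fderiv_radial hu x t
    nlinarith [mul_nonneg ht.le hint]
  have hmono : MonotoneOn (fun t : ℝ => ∫ y in ball (0 : E) 1, u (x + t • y)) (Icc 0 r) := by
    refine monotoneOn_of_deriv_nonneg (convex_Icc 0 r)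
      (fun t _ => (hderiv t).continuousAt.continuousWithinAt)
      (fun t _ => (hderiv t).differentiableAt.differentiableWithinAt) fun t ht => ?_
    rw [(hderiv t).deriv]
    exact hderiv_nonneg t (interior_Icc (a := (0 : ℝ)) ▸ ht).1
  rw [setAverage_ball_eq_setAverage_unitBall u x hr, le_setAverage_ball_iff _ _ one_pos]
  calc u x * volume.real (ball (0 : E) 1) = ∫ y in ball (0 : E) 1, u (x + (0 : ℝ) • y) := by
        simp [mul_comm]
    _ ≤ ∫ y in ball (0 : E) 1, u (x + r • y) :=
        hmono (left_mem_Icc.2 hr.le) (right_mem_Icc.2 hr.le) hr.le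

end MeanValueInequality

lemma eventually_nhdsGT_closedBall_subset {E : Type*} [PseudoMetricSpace E] {U : Set E} {x : E}
    (hU : U ∈ 𝓝 x) : ∀ᶠ ρ : ℝ in 𝓝[>] 0, closedBall x ρ ⊆ U :=
  (eventually_closedBall_subset hU).filter_mono nhdsWithin_le_nhds

section LocalSubMean

variable {E : Type*} [NormedAddCommGroup E] [InnerProductSpace ℝ E] [MeasurableSpace E]
  [BorelSpace E] [FiniteDimensional ℝ E] {u v : E → ℝ} {x : E} {m : ℝ}

/-- The sub-mean value property of `v` on all sufficiently small balls centered at `x`. -/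
def LocalSubMeanAt (v : E → ℝ) (x : E) : Prop := ∀ᶠ ρ in 𝓝[>] 0, v x ≤ ⨍ y in ball x ρ, v y

lemma LocalSubMeanAt.add {U : Set E} (hU : U ∈ 𝓝 x) (hu : LocalSubMeanAt u x)
    (hv : LocalSubMeanAt v x) (huc : ContinuousOn u U) (hvc : ContinuousOn v U) :
    LocalSubMeanAt (fun y => u y + v y) x := by
  filter_upwards [hu, hv, eventually_nhdsGT_closedBall_subset hU] with ρ hρu hρv hsub
  rw [setAverage_ball_add (huc.mono hsub) (hvc.mono hsub)]
  exact add_le_add hρu hρv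

/-- In the set where the maximum is attained, a point that is furthest in some fixed direction
cannot be interior. -/
theorem le_of_localSubMeanAt_of_forall_frontier_le [Nontrivial E] {K : Set E} (hK : IsCompact K)
    (hv : ContinuousOn v K) (hl : ∀ y ∈ interior K, LocalSubMeanAt v y)
    (hm : ∀ y ∈ frontier K, v y ≤ m) (hx : x ∈ K) : v x ≤ m := by
  obtain ⟨x₀, hx₀, hmax⟩ := hK.exists_isMaxOn ⟨x, hx⟩ hv
  rw [isMaxOn_iff] at hmax
  refine (hmax x hx).trans (not_lt.1 fun hlt => ?_)
  obtain ⟨e, he⟩ := exists_norm_eq E (zero_le_one (α := ℝ))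
  have hZ : IsCompact (K ∩ v ⁻¹' {v x₀}) := hK.of_isClosed_subset
    (hv.preimage_isClosed_of_isClosed hK.isClosed isClosed_singleton) inter_subset_left
  obtain ⟨z, ⟨hzK, hz⟩, hzmax⟩ := hZ.exists_isMaxOn ⟨x₀, hx₀, rfl⟩
    (f := fun y => inner ℝ e y) (by fun_prop)
  rw [isMaxOn_iff] at hzmax
  have hzint : z ∈ interior K := by
    by_contra hcon
    have := hm z (hK.isClosed.frontier_eq ▸ ⟨hzK, hcon⟩)
    exact hlt.not_ge (Set.mem_singleton_iff.1 hz ▸ this)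
  obtain ⟨ρ, ⟨hmean, hsub⟩, hρ⟩ := (((hl z hzint).and (eventually_nhdsGT_closedBall_subset
    (mem_interior_iff_mem_nhds.1 hzint))).and self_mem_nhdsWithin).exists
  have hconst := eqOn_ball_of_le_setAverage hρ (hv.mono hsub)
    (fun y hy => hmax y (hsub (ball_subset_closedBall hy))) (hz.symm.trans_le hmean)
  have hfurther : z + (ρ / 2) • e ∈ ball z ρ := by
    rw [mem_ball, dist_self_add_left, norm_smul, he, Real.norm_of_nonneg (by positivity)]
    linarith
  have := hzmax _ ⟨hsub (ball_subset_closedBall hfurther), hconst _ hfurther⟩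
  rw [inner_add_right, inner_smul_right, real_inner_self_eq_norm_sq, he] at this
  linarith

lemma continuousOn_setIntegral_ball [Nontrivial E] {r : ℝ} (hv : ContinuousOn v (closedBall x r)) :
    ContinuousOn (fun s => ∫ y in ball x s, v y) (Iic r) := by
  have hrestrict : ∀ s ∈ Iic r,
      ∫ y in ball x r, (ball x s).indicator v y = ∫ y in ball x s, v y := fun s hs => by
    rw [setIntegral_indicator measurableSet_ball,
      inter_eq_self_of_subset_right (ball_subset_ball hs)]
  refine ContinuousOn.congr (fun s _ => ?_) fun s hs => (hrestrict s hs).symm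
  refine continuousWithinAt_of_dominated (bound := fun y => ‖v y‖)
    (Eventually.of_forall fun t =>
      (integrableOn_ball hv).aestronglyMeasurable.indicator measurableSet_ball)
    (Eventually.of_forall fun t => Eventually.of_forall fun y => norm_indicator_le_norm_self _ _)
    (integrableOn_ball hv).norm ?_
  have hsphere : ∀ᵐ y : E, y ∉ sphere x s :=
    measure_eq_zero_iff_ae_notMem.1 (Measure.addHaar_sphere volume x s)
  filter_upwards [ae_restrict_of_ae hsphere] with y hy
  refine (continuousAt_const.congr (f := fun _ => (ball x s).indicator v y) ?_).continuousWithinAt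
  rcases lt_or_gt_of_ne (mem_sphere.not.1 hy) with h | h
  · filter_upwards [lt_mem_nhds h] with t ht
    rw [indicator_of_mem (mem_ball.2 h), indicator_of_mem (mem_ball.2 ht)]
  · filter_upwards [gt_mem_nhds h] with t ht
    rw [indicator_of_notMem (mem_ball.not.2 h.not_gt),
      indicator_of_notMem (mem_ball.not.2 ht.not_gt)]

end LocalSubMean

section HarmonicFunctions

variable {d : ℕ} {u v h : Euc d → ℝ} {U : Set (Euc d)} {x a : Euc d} {r R m : ℝ}

lemma SubharmonicOn.localSubMeanAt (hu : SubharmonicOn u U) (hU : U ∈ 𝓝 x) :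
    LocalSubMeanAt u x := by
  filter_upwards [eventually_nhdsGT_closedBall_subset hU, self_mem_nhdsWithin] with ρ hsub hρ
  exact hu.2 x (mem_of_mem_nhds hU) ρ hρ hsub

lemma HarmonicOnS.eq_setAverage (hh : HarmonicOnS h U) (hr : 0 < r) (hsub : closedBall x r ⊆ U) :
    h x = ⨍ y in ball x r, h y := by
  have hx : x ∈ U := hsub (mem_closedBall_self hr.le)
  refine le_antisymm (hh.1.2 x hx r hr hsub) (neg_le_neg_iff.1 ?_)
  rw [← setAverage_ball_neg]
  exact hh.2.2 x hx r hr hsub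

lemma tendsto_setAverage_ball_of_tendstoUniformlyOn {ι : Type*} {l : Filter ι}
    {f : ι → Euc d → ℝ} (hr : 0 < r) (hf : ∀ i, ContinuousOn (f i) (closedBall x r))
    (hh : ContinuousOn h (closedBall x r)) (hlim : TendstoUniformlyOn f h l (closedBall x r)) :
    Tendsto (fun i => ⨍ y in ball x r, f i y) l (𝓝 (⨍ y in ball x r, h y)) := by
  rw [Metric.tendsto_nhds]
  intro ε hε
  filter_upwards [Metric.tendstoUniformlyOn_iff.1 hlim (ε / 2) (half_pos hε)] with i hi
  refine lt_of_le_of_lt (abs_setAverage_ball_sub_le hr (hf i) hh fun y hy => ?_) (half_lt_self hε)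
  rw [abs_sub_comm]
  exact (hi y (ball_subset_closedBall hy)).le

lemma SubharmonicOn.of_tendstoUniformlyOn {ι : Type*} {l : Filter ι} [l.NeBot]
    {f : ι → Euc d → ℝ} (hf : ∀ i, SubharmonicOn (f i) U) (hlim : TendstoUniformlyOn f h l U) :
    SubharmonicOn h U := by
  have hc : ContinuousOn h U := hlim.continuousOn (Frequently.of_forall fun i => (hf i).1)
  refine ⟨hc, fun x hx r hr hsub => ?_⟩
  exact le_of_tendsto_of_tendsto' (hlim.tendsto_at hx)
    (tendsto_setAverage_ball_of_tendstoUniformlyOn hr (fun i => (hf i).1.mono hsub)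
      (hc.mono hsub) (hlim.mono hsub)) fun i => (hf i).2 x hx r hr hsub

lemma HarmonicOnS.of_tendstoUniformlyOn {ι : Type*} {l : Filter ι} [l.NeBot]
    {f : ι → Euc d → ℝ} (hf : ∀ i, HarmonicOnS (f i) U) (hlim : TendstoUniformlyOn f h l U) :
    HarmonicOnS h U :=
  ⟨.of_tendstoUniformlyOn (fun i => (hf i).1) hlim,
    .of_tendstoUniformlyOn (fun i => (hf i).2) (uniformContinuous_neg.comp_tendstoUniformlyOn hlim)⟩

variable [NeZero d]

lemma le_of_localSubMeanAt_of_forall_sphere_le (hR : 0 < R) (hv : ContinuousOn v (closedBall a R))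
    (hl : ∀ y ∈ ball a R, LocalSubMeanAt v y) (hm : ∀ y ∈ sphere a R, v y ≤ m)
    (hx : x ∈ closedBall a R) : v x ≤ m :=
  le_of_localSubMeanAt_of_forall_frontier_le (isCompact_closedBall a R) hv
    (interior_closedBall a hR.ne' ▸ hl) (frontier_closedBall a hR.ne' ▸ hm) hx

lemma le_harmonicOnS_of_forall_sphere_le (hR : 0 < R) (hv : ContinuousOn v (closedBall a R))
    (hl : ∀ y ∈ ball a R, LocalSubMeanAt v y) (hh : HarmonicOnS h (closedBall a R))
    (hs : ∀ y ∈ sphere a R, v y ≤ h y) (hx : x ∈ closedBall a R) : v x ≤ h x := by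
  rw [← sub_nonpos, sub_eq_add_neg]
  refine le_of_localSubMeanAt_of_forall_sphere_le (v := fun y => v y + -h y) hR
    (hv.add hh.2.1) (fun y hy => ?_) (fun y hy => by linarith [hs y hy]) hx
  have hU : closedBall a R ∈ 𝓝 y := mem_of_superset (isOpen_ball.mem_nhds hy) ball_subset_closedBall
  exact (hl y hy).add hU (hh.2.localSubMeanAt hU) hv hh.2.1

lemma HarmonicOnS.abs_le_of_forall_sphere (hR : 0 < R) (hh : HarmonicOnS h (closedBall a R))
    (hm : ∀ y ∈ sphere a R, |h y| ≤ m) (hx : x ∈ closedBall a R) : |h x| ≤ m := by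
  have hU : ∀ y ∈ ball a R, closedBall a R ∈ 𝓝 y := fun y hy =>
    mem_of_superset (isOpen_ball.mem_nhds hy) ball_subset_closedBall
  refine abs_le'.2 ⟨?_, ?_⟩
  · exact le_of_localSubMeanAt_of_forall_sphere_le hR hh.1.1
      (fun y hy => hh.1.localSubMeanAt (hU y hy)) (fun y hy => (abs_le'.1 (hm y hy)).1) hx
  · exact le_of_localSubMeanAt_of_forall_sphere_le (v := fun y => -h y) hR hh.2.1
      (fun y hy => hh.2.localSubMeanAt (hU y hy)) (fun y hy => (abs_le'.1 (hm y hy)).2) hx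

end HarmonicFunctions

section DirichletProblem

open MvPolynomial
open scoped Laplacian

variable {d : ℕ} {a : Euc d} {R : ℝ}

/-- The polynomial function on `ℝ^d` attached to a polynomial, as an algebra homomorphism. -/
def polyFun : MvPolynomial (Fin d) ℝ →ₐ[ℝ] (Euc d → ℝ) := aeval fun i x => x i

lemma polyFun_C (c : ℝ) : polyFun (C c : MvPolynomial (Fin d) ℝ) = fun _ => c := by
  rw [polyFun, aeval_C]
  rfl

lemma polyFun_X (i : Fin d) : polyFun (X i) = fun x => x i := by rw [polyFun, aeval_X]

lemma polyFun_apply (q : MvPolynomial (Fin d) ℝ) (x : Euc d) :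
    polyFun q x = eval (fun i => x i) q := by
  have : (Pi.evalAlgHom ℝ (fun _ : Euc d => ℝ) x).comp polyFun = aeval fun i => x i :=
    algHom_ext fun i => by simp [polyFun_X]
  exact DFunLike.congr_fun this q

lemma contDiff_polyFun (q : MvPolynomial (Fin d) ℝ) {k : WithTop ℕ∞} :
    ContDiff ℝ k (polyFun q) := by
  induction q using MvPolynomial.induction_on with
  | C c => rw [polyFun_C]; exact contDiff_const
  | add p q hp hq => rw [map_add]; exact hp.add hq
  | mul_X p i hp => rw [map_mul, polyFun_X]; exact hp.mul (by fun_prop)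

lemma fderiv_polyFun_single (q : MvPolynomial (Fin d) ℝ) (i : Fin d) :
    (fun x => fderiv ℝ (polyFun q) x (EuclideanSpace.single i 1)) = polyFun (pderiv i q) := by
  have hdiff : ∀ q : MvPolynomial (Fin d) ℝ, Differentiable ℝ (polyFun q) := fun q =>
    (contDiff_polyFun q).differentiable one_ne_zero
  funext x
  induction q using MvPolynomial.induction_on with
  | C c => rw [polyFun_C, fderiv_fun_const]; simp
  | add p q hp hq => simp [fderiv_add (hdiff p x) (hdiff q x), hp, hq]
  | mul_X p j hp =>
    have hcoord : fderiv ℝ (fun y : Euc d => y j) x = EuclideanSpace.proj j :=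
      (EuclideanSpace.proj j : Euc d →L[ℝ] ℝ).fderiv
    rw [map_mul, fderiv_mul (hdiff p x) (hdiff _ x), polyFun_X, hcoord, Derivation.leibniz,
      pderiv_X]
    by_cases hij : j = i
    · subst hij
      simp [hp, polyFun_X]
    · simp [hp, polyFun_X, hij]

/-- The Laplace operator on polynomials. -/
def polyLaplacian : MvPolynomial (Fin d) ℝ →ₗ[ℝ] MvPolynomial (Fin d) ℝ :=
  ∑ i, (pderiv i).toLinearMap ∘ₗ (pderiv i).toLinearMap

lemma polyLaplacian_apply (q : MvPolynomial (Fin d) ℝ) :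
    polyLaplacian q = ∑ i, pderiv i (pderiv i q) := by
  simp [polyLaplacian]

lemma laplacian_polyFun (q : MvPolynomial (Fin d) ℝ) :
    Δ (polyFun q) = polyFun (polyLaplacian q) := by
  funext x
  rw [laplacian_eq_sum_fderiv_fderiv (contDiff_polyFun q) (EuclideanSpace.basisFun (Fin d) ℝ),
    polyLaplacian_apply, map_sum, Finset.sum_apply]
  refine Finset.sum_congr rfl fun i _ => ?_
  rw [EuclideanSpace.basisFun_apply, fderiv_polyFun_single, ← fderiv_polyFun_single (pderiv i q)]

lemma totalDegree_pderiv_le {σ R : Type*} [CommSemiring R] (q : MvPolynomial σ R) (i : σ) :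
    (pderiv i q).totalDegree ≤ q.totalDegree - 1 := by
  refine Finset.sup_le fun s hs => ?_
  rw [mem_support_iff, coeff_pderiv] at hs
  have hle := le_totalDegree (mem_support_iff.2 (left_ne_zero_of_mul hs))
  rw [Finsupp.sum_add_index' (fun _ => rfl) (fun _ _ _ => rfl), Finsupp.sum_single_index rfl] at hle
  exact Nat.le_sub_of_add_le hle

lemma totalDegree_polyLaplacian_le (q : MvPolynomial (Fin d) ℝ) :
    (polyLaplacian q).totalDegree ≤ q.totalDegree - 2 := by
  rw [polyLaplacian_apply]
  refine totalDegree_finsetSum_le fun i _ => ?_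
  have hfst := totalDegree_pderiv_le q i
  have hsnd := totalDegree_pderiv_le (pderiv i q) i
  lia

/-- The polynomial `R² - |x - a|²` vanishing on the sphere `∂B(a, R)`. -/
def spherePoly (a : Euc d) (R : ℝ) : MvPolynomial (Fin d) ℝ :=
  C (R ^ 2) - ∑ i, (X i - C (a i)) ^ 2

lemma polyFun_spherePoly (a : Euc d) (R : ℝ) (x : Euc d) :
    polyFun (spherePoly a R) x = R ^ 2 - dist x a ^ 2 := by
  simp [polyFun_apply, spherePoly, EuclideanSpace.dist_sq_eq, Real.dist_eq, sq_abs]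

lemma totalDegree_spherePoly_le (a : Euc d) (R : ℝ) : (spherePoly a R).totalDegree ≤ 2 := by
  refine (totalDegree_sub _ _).trans (max_le (by rw [totalDegree_C]; exact zero_le_two) ?_)
  refine totalDegree_finsetSum_le fun i _ => (totalDegree_pow _ _).trans ?_
  have hdeg : (X i - C (a i) : MvPolynomial (Fin d) ℝ).totalDegree ≤ 1 :=
    (totalDegree_sub _ _).trans
      (max_le (totalDegree_X i).le (by rw [totalDegree_C]; exact zero_le_one))
  exact Nat.mul_le_mul_left 2 hdeg

lemma eq_zero_of_polyFun_eqOn_ball {q : MvPolynomial (Fin d) ℝ} (hR : 0 < R)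
    (hq : ∀ x ∈ ball a R, polyFun q x = 0) : q = 0 := by
  have hopen : IsOpen (WithLp.toLp 2 ⁻¹' ball a R : Set (Fin d → ℝ)) :=
    isOpen_ball.preimage (PiLp.continuous_toLp 2 _)
  obtain ⟨ε, hε, hsub⟩ := Metric.isOpen_iff.1 hopen a (by simpa using hR)
  refine MvPolynomial.funext_set (fun i => ball (a i) ε) (fun i => ?_) fun x hx => ?_
  · rw [Real.ball_eq_Ioo]
    exact Set.Ioo_infinite (by linarith)
  · rw [map_zero]
    have := hq (WithLp.toLp 2 x) (hsub (by rwa [ball_pi a.ofLp hε]))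
    rwa [polyFun_apply] at this

lemma exists_polyFun_near_sphere {v : Euc d → ℝ} (hv : ContinuousOn v (sphere a R)) {ε : ℝ}
    (hε : 0 < ε) : ∃ q, ∀ x ∈ sphere a R, |polyFun q x - v x| < ε := by
  have : CompactSpace (sphere a R) := isCompact_iff_compactSpace.1 (isCompact_sphere a R)
  let φ : MvPolynomial (Fin d) ℝ →ₐ[ℝ] C(sphere a R, ℝ) :=
    aeval fun i => ⟨fun x => x.1 i, by fun_prop⟩
  have hφ : ∀ q (x : sphere a R), φ q x = polyFun q x := fun q x =>
    DFunLike.congr_fun (f := (ContinuousMap.evalAlgHom ℝ ℝ x).comp φ)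
      (g := (Pi.evalAlgHom ℝ (fun _ : Euc d => ℝ) x.1).comp polyFun)
      (algHom_ext fun i => by simp [φ, polyFun_X]) q
  have hsep : φ.range.SeparatesPoints := fun x y hxy => by
    obtain ⟨i, hi⟩ : ∃ i, x.1 i ≠ y.1 i := not_forall.1 fun h => hxy (Subtype.ext (PiLp.ext h))
    exact ⟨φ (X i), ⟨φ (X i), ⟨X i, rfl⟩, rfl⟩, by simpa only [hφ, polyFun_X] using hi⟩
  obtain ⟨⟨_, q, rfl⟩, hq⟩ :=
    ContinuousMap.exists_mem_subalgebra_near_continuous_of_separatesPoints φ.range hsep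
      (fun x => v x) (continuousOn_iff_continuous_domRestrict.1 hv) ε hε
  exact ⟨q, fun x hx => hφ q ⟨x, hx⟩ ▸ hq ⟨x, hx⟩⟩

variable [NeZero d]

lemma harmonicOnS_polyFun {q : MvPolynomial (Fin d) ℝ} (hq : polyLaplacian q = 0)
    (U : Set (Euc d)) : HarmonicOnS (polyFun q) U := by
  have hsub : ∀ p : MvPolynomial (Fin d) ℝ, polyLaplacian p = 0 → SubharmonicOn (polyFun p) U :=
    fun p hp => ⟨(contDiff_polyFun p (k := 0)).continuous.continuousOn, fun x _ r hr _ =>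
      le_setAverage_ball_of_laplacian_nonneg (contDiff_polyFun p)
        (fun y => by rw [laplacian_polyFun, hp, map_zero]; rfl) x hr⟩
  have hneg := hsub (-q) (by rw [map_neg, hq, neg_zero])
  rw [map_neg] at hneg
  exact ⟨hsub q hq, hneg⟩

lemma eq_zero_of_polyLaplacian_spherePoly_mul_eq_zero {q : MvPolynomial (Fin d) ℝ} (hR : 0 < R)
    (hq : polyLaplacian (spherePoly a R * q) = 0) : q = 0 := by
  refine eq_zero_of_polyFun_eqOn_ball (a := a) hR fun x hx => ?_
  have hzero : |polyFun (spherePoly a R * q) x| ≤ 0 :=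
    (harmonicOnS_polyFun hq _).abs_le_of_forall_sphere hR
      (fun y hy => by simp [polyFun_spherePoly, mem_sphere.1 hy]) (ball_subset_closedBall hx)
  rw [abs_nonpos_iff, map_mul, Pi.mul_apply, polyFun_spherePoly] at hzero
  have hpos : 0 < R ^ 2 - dist x a ^ 2 := sub_pos.2 (pow_lt_pow_left₀ hx dist_nonneg two_ne_zero)
  exact (mul_eq_zero.1 hzero).resolve_left hpos.ne'

/-- The map `q ↦ Δ((R² - |x - a|²) q)` does not raise the degree and is injective, hence it is
onto the polynomials of bounded degree. -/
lemma exists_polyLaplacian_spherePoly_mul_eq (a : Euc d) (hR : 0 < R)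
    (q : MvPolynomial (Fin d) ℝ) : ∃ s, polyLaplacian (spherePoly a R * s) = q := by
  let W := restrictTotalDegree (Fin d) ℝ q.totalDegree
  let T : MvPolynomial (Fin d) ℝ →ₗ[ℝ] MvPolynomial (Fin d) ℝ :=
    polyLaplacian ∘ₗ LinearMap.mulLeft ℝ (spherePoly a R)
  have hT : ∀ s ∈ W, T s ∈ W := fun s hs => by
    rw [mem_restrictTotalDegree] at hs ⊢
    have hlap := totalDegree_polyLaplacian_le (spherePoly a R * s)
    have hmul := totalDegree_mul (spherePoly a R) s
    have hsphere := totalDegree_spherePoly_le a R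
    exact hlap.trans (by lia)
  have hinj : Function.Injective (T.restrict hT) := by
    rw [← LinearMap.ker_eq_bot, LinearMap.ker_eq_bot']
    exact fun s hs =>
      Subtype.ext (eq_zero_of_polyLaplacian_spherePoly_mul_eq_zero hR (congrArg Subtype.val hs))
  obtain ⟨s, hs⟩ := LinearMap.injective_iff_surjective.1 hinj
    ⟨q, (mem_restrictTotalDegree _ _ _).2 le_rfl⟩
  exact ⟨s, congrArg Subtype.val hs⟩

lemma exists_harmonic_polyFun_near_sphere {v : Euc d → ℝ} (hR : 0 < R)
    (hv : ContinuousOn v (sphere a R)) {ε : ℝ} (hε : 0 < ε) :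
    ∃ q, polyLaplacian q = 0 ∧ ∀ x ∈ sphere a R, |polyFun q x - v x| < ε := by
  obtain ⟨q, hq⟩ := exists_polyFun_near_sphere hv hε
  obtain ⟨s, hs⟩ := exists_polyLaplacian_spherePoly_mul_eq a hR (polyLaplacian q)
  refine ⟨q - spherePoly a R * s, by rw [map_sub, hs, sub_self], fun x hx => ?_⟩
  have hvanish : polyFun (spherePoly a R) x = 0 := by
    rw [polyFun_spherePoly, mem_sphere.1 hx, sub_self]
  simpa [hvanish] using hq x hx

theorem exists_harmonicOnS_closedBall_eqOn_sphere {v : Euc d → ℝ} (hR : 0 < R)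
    (hv : ContinuousOn v (sphere a R)) :
    ∃ h, HarmonicOnS h (closedBall a R) ∧ EqOn h v (sphere a R) := by
  choose P hharm hnear using fun k : ℕ =>
    exists_harmonic_polyFun_near_sphere hR hv (Nat.one_div_pos_of_nat (α := ℝ) (n := k))
  have hcauchy : UniformCauchySeqOn (fun k => polyFun (P k)) atTop (closedBall a R) := by
    rw [Metric.uniformCauchySeqOn_iff]
    intro ε hε
    obtain ⟨N, hN⟩ := exists_nat_one_div_lt (half_pos hε)
    refine ⟨N, fun k hk l hl x hx => ?_⟩
    have hmax : |polyFun (P k - P l) x| ≤ 1 / ((N : ℝ) + 1) + 1 / ((N : ℝ) + 1) := by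
      refine (harmonicOnS_polyFun (by rw [map_sub, hharm, hharm, sub_zero])
        _).abs_le_of_forall_sphere hR (fun y hy => ?_) hx
      rw [map_sub, Pi.sub_apply, ← sub_sub_sub_cancel_right _ _ (v y)]
      exact (abs_sub _ _).trans (add_le_add
        ((hnear k y hy).le.trans (Nat.one_div_le_one_div hk))
        ((hnear l y hy).le.trans (Nat.one_div_le_one_div hl)))
    rw [map_sub, Pi.sub_apply, ← Real.dist_eq] at hmax
    linarith
  choose! h hh using fun x (hx : x ∈ closedBall a R) =>
    cauchySeq_tendsto_of_complete (hcauchy.cauchySeq hx)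
  refine ⟨h, .of_tendstoUniformlyOn (fun k => harmonicOnS_polyFun (hharm k) _)
    (hcauchy.tendstoUniformlyOn_of_tendsto hh), fun x hx => ?_⟩
  refine tendsto_nhds_unique (hh x (sphere_subset_closedBall hx))
    (tendsto_iff_dist_tendsto_zero.2 ?_)
  exact squeeze_zero (fun _ => dist_nonneg) (fun k => (hnear k x hx).le)
    tendsto_one_div_add_atTop_nhds_zero_nat

end DirichletProblem

section LocalToGlobal

variable {d : ℕ} [NeZero d] {v : Euc d → ℝ} {U : Set (Euc d)} {y : Euc d} {r ε : ℝ}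

/-- Near the sphere, `v` is `ε`-close to the harmonic function `h ≥ v` with the same boundary
values, and `h` has average `h y ≥ v y` over annuli centered at `y`. -/
lemma exists_lt_setIntegral_ball_le (hr : 0 < r) (hε : 0 < ε)
    (hv : ContinuousOn v (closedBall y r)) (hl : ∀ x ∈ ball y r, LocalSubMeanAt v x) :
    ∃ s ∈ Ioo 0 r, ∫ x in ball y s, (v x - (v y - ε)) ≤ ∫ x in ball y r, (v x - (v y - ε)) := by
  obtain ⟨h, hh, hhv⟩ :=
    exists_harmonicOnS_closedBall_eqOn_sphere hr (hv.mono sphere_subset_closedBall)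
  have hle : v y ≤ h y := le_harmonicOnS_of_forall_sphere_le hr hv hl hh
    (fun x hx => (hhv hx).ge) (mem_closedBall_self hr.le)
  have hclosed : IsClosed (closedBall y r ∩ (fun x => h x - v x) ⁻¹' Ici ε) :=
    (hh.1.1.sub hv).preimage_isClosed_of_isClosed isClosed_closedBall isClosed_Ici
  obtain ⟨s, hs, hsub⟩ := exists_pos_lt_subset_ball hr hclosed fun x ⟨hx, hfar⟩ =>
    (mem_closedBall.1 hx).lt_of_ne fun hsphere => by
      rw [mem_preimage, mem_Ici, hhv hsphere, sub_self] at hfar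
      exact hfar.not_gt hε
  refine ⟨s, hs, ?_⟩
  have hvc : ContinuousOn (fun x => v x - (v y - ε)) (closedBall y r) := hv.sub continuousOn_const
  have hhc : ContinuousOn (fun x => h x - h y) (closedBall y r) := hh.1.1.sub continuousOn_const
  have hzero : ∀ t ∈ Ioc 0 r, ∫ x in ball y t, (h x - h y) = 0 := fun t ht => by
    have hsub := closedBall_subset_closedBall (x := y) ht.2
    rw [setIntegral_ball_eq_mul_setAverage _ _ ht.1,
      setAverage_ball_sub (hh.1.1.mono hsub) continuousOn_const, setAverage_ball_const _ _ ht.1,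
      ← hh.eq_setAverage ht.1 hsub, sub_self, zero_mul]
  rw [← sub_nonneg, ← setIntegral_sdiff measurableSet_ball (integrableOn_ball hvc)
    (ball_subset_ball hs.2.le)]
  calc 0 = ∫ x in ball y r \ ball y s, (h x - h y) := by
        rw [setIntegral_sdiff measurableSet_ball (integrableOn_ball hhc) (ball_subset_ball hs.2.le),
          hzero r ⟨hr, le_rfl⟩, hzero s ⟨hs.1, hs.2.le⟩, sub_self]
    _ ≤ ∫ x in ball y r \ ball y s, (v x - (v y - ε)) := by
        refine setIntegral_mono_on ((integrableOn_ball hhc).mono_set sdiff_subset)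
          ((integrableOn_ball hvc).mono_set sdiff_subset)
          (measurableSet_ball.diff measurableSet_ball) fun x hx => ?_
        have : h x - v x < ε := not_le.1 fun hfar =>
          hx.2 (hsub ⟨ball_subset_closedBall hx.1, hfar⟩)
        linarith

theorem le_setAverage_ball_of_localSubMeanAt (hr : 0 < r) (hv : ContinuousOn v (closedBall y r))
    (hl : ∀ x ∈ ball y r, LocalSubMeanAt v x) : v y ≤ ⨍ x in ball y r, v x := by
  refine le_of_forall_pos_sub_le fun ε hε => ?_
  let J : ℝ → ℝ := fun s => ∫ x in ball y s, (v x - (v y - ε))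
  have hJ : ContinuousOn J (Icc 0 r) :=
    (continuousOn_setIntegral_ball (hv.sub continuousOn_const)).mono fun s hs => hs.2
  have hzero : (0 : ℝ) ∈ {s | J s ≤ J r} := by
    refine IsClosed.mem_of_ge_of_forall_exists_lt (b := r) ?_ (le_refl (J r)) hr.le fun t ht => ?_
    · rw [inter_comm]
      exact hJ.preimage_isClosed_of_isClosed isClosed_Icc isClosed_Iic
    · obtain ⟨s, hs, hst⟩ := exists_lt_setIntegral_ball_le ht.2.1 hε
        (hv.mono (closedBall_subset_closedBall ht.2.2))
        fun x hx => hl x (ball_subset_ball ht.2.2 hx)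
      exact ⟨s, hst.trans ht.1, hs.1.le, hs.2⟩
  simp only [J, mem_ofPred_eq, ball_zero, Measure.restrict_empty, integral_zero_measure] at hzero
  rw [integral_sub (integrableOn_ball hv) (integrableOn_ball continuousOn_const),
    setIntegral_const, smul_eq_mul, mul_comm, sub_nonneg] at hzero
  exact (le_setAverage_ball_iff _ _ hr).2 hzero

lemma subharmonicOn_of_localSubMeanAt (hv : ContinuousOn v U)
    (hl : ∀ x ∈ interior U, LocalSubMeanAt v x) : SubharmonicOn v U :=
  ⟨hv, fun _ _ _ hr hsub => le_setAverage_ball_of_localSubMeanAt hr (hv.mono hsub) fun x hx =>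
    hl x (interior_maximal (ball_subset_closedBall.trans hsub) isOpen_ball hx)⟩

end LocalToGlobal

section SubharmonicOperations

variable {d : ℕ} {U : Set (Euc d)} {u v h : Euc d → ℝ} {a : Euc d} {R : ℝ}

lemma subharmonicOn_const (c : ℝ) (U : Set (Euc d)) : SubharmonicOn (fun _ => c) U :=
  ⟨continuousOn_const, fun x _ _ hr _ => (setAverage_ball_const c x hr).ge⟩

lemma SubharmonicOn.add (hu : SubharmonicOn u U) (hv : SubharmonicOn v U) :
    SubharmonicOn (fun x => u x + v x) U := by
  refine ⟨hu.1.add hv.1, fun x hx r hr hsub => ?_⟩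
  rw [setAverage_ball_add (hu.1.mono hsub) (hv.1.mono hsub)]
  exact add_le_add (hu.2 x hx r hr hsub) (hv.2 x hx r hr hsub)

lemma SubharmonicOn.const_mul {c : ℝ} (hc : 0 ≤ c) (hv : SubharmonicOn v U) :
    SubharmonicOn (fun x => c * v x) U := by
  refine ⟨continuousOn_const.mul hv.1, fun x hx r hr hsub => ?_⟩
  rw [setAverage_ball_const_mul]
  exact mul_le_mul_of_nonneg_left (hv.2 x hx r hr hsub) hc

lemma SubharmonicOn.max (hu : SubharmonicOn u U) (hv : SubharmonicOn v U) :
    SubharmonicOn (fun x => max (u x) (v x)) U := by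
  have hc : ContinuousOn (fun x => Max.max (u x) (v x)) U := hu.1.sup hv.1
  refine ⟨hc, fun x hx r hr hsub => max_le ?_ ?_⟩
  · exact (hu.2 x hx r hr hsub).trans
      (setAverage_ball_mono (hu.1.mono hsub) (hc.mono hsub) fun y _ => le_max_left _ _)
  · exact (hv.2 x hx r hr hsub).trans
      (setAverage_ball_mono (hv.1.mono hsub) (hc.mono hsub) fun y _ => le_max_right _ _)

lemma SubharmonicOn.congr (hu : SubharmonicOn u U) (huv : EqOn v u U) : SubharmonicOn v U := by
  refine ⟨hu.1.congr huv, fun x hx r hr hsub => ?_⟩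
  rw [huv hx, setAverage_congr_fun measurableSet_ball
    (.of_forall fun y hy => huv (hsub (ball_subset_closedBall hy)))]
  exact hu.2 x hx r hr hsub

lemma HarmonicOnS.congr (hu : HarmonicOnS u U) (huv : EqOn v u U) : HarmonicOnS v U :=
  ⟨SubharmonicOn.congr hu.1 huv, SubharmonicOn.congr hu.2 fun _ hx => congrArg Neg.neg (huv hx)⟩

lemma HarmonicOnS.add_const (hh : HarmonicOnS h U) (c : ℝ) : HarmonicOnS (fun x => h x + c) U := by
  refine ⟨SubharmonicOn.add hh.1 (subharmonicOn_const c U), ?_⟩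
  simpa only [neg_add] using SubharmonicOn.add hh.2 (subharmonicOn_const (-c) U)

variable [NeZero d]

open scoped Classical in
lemma SubharmonicOn.piecewise_ball (hU : IsOpen U) (hv : SubharmonicOn v U) (hR : 0 < R)
    (hh : SubharmonicOn h (closedBall a R)) (hs : EqOn h v (sphere a R))
    (hle : ∀ x ∈ ball a R, v x ≤ h x) :
    SubharmonicOn ((ball a R).piecewise h v) U := by
  set w := (ball a R).piecewise h v with hw
  have hvw : ∀ x, v x ≤ w x := fun x => by
    by_cases hx : x ∈ ball a R
    · rw [hw, piecewise_eq_of_mem _ _ _ hx]; exact hle x hx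
    · rw [hw, piecewise_eq_of_notMem _ _ _ hx]
  have hwc : ContinuousOn w U := by
    refine ContinuousOn.piecewise (fun x hx => ?_) ?_ (hv.1.mono inter_subset_left)
    · rw [frontier_ball _ hR.ne'] at hx
      exact hs hx.2
    · rw [closure_ball _ hR.ne']
      exact hh.1.mono inter_subset_right
  refine subharmonicOn_of_localSubMeanAt hwc fun x hx => ?_
  rw [hU.interior_eq] at hx
  by_cases hxB : x ∈ ball a R
  · have hball := isOpen_ball.mem_nhds hxB
    filter_upwards [hh.localSubMeanAt (mem_of_superset hball ball_subset_closedBall),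
      eventually_nhdsGT_closedBall_subset hball] with ρ hρ hsub
    rw [hw, piecewise_eq_of_mem _ _ _ hxB, setAverage_congr_fun measurableSet_ball]
    exacts [hρ, .of_forall fun y hy => piecewise_eq_of_mem _ _ _ (hsub (ball_subset_closedBall hy))]
  · filter_upwards [hv.localSubMeanAt (hU.mem_nhds hx),
      eventually_nhdsGT_closedBall_subset (hU.mem_nhds hx)] with ρ hρ hsub
    rw [show w x = v x from piecewise_eq_of_notMem _ _ _ hxB]
    exact hρ.trans (setAverage_ball_mono (hv.1.mono hsub) (hwc.mono hsub) fun y _ => hvw y)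

theorem SubharmonicOn.exists_poissonModification (hU : IsOpen U) (hv : SubharmonicOn v U)
    (hR : 0 < R) (hB : closedBall a R ⊆ U) :
    ∃ w, SubharmonicOn w U ∧ HarmonicOnS w (closedBall a R) ∧ (∀ x, v x ≤ w x) ∧
      ∀ x ∉ ball a R, w x = v x := by
  classical
  obtain ⟨h, hh, hs⟩ :=
    exists_harmonicOnS_closedBall_eqOn_sphere hR (hv.1.mono (sphere_subset_closedBall.trans hB))
  have hle : ∀ x ∈ closedBall a R, v x ≤ h x := fun x hx =>
    le_harmonicOnS_of_forall_sphere_le hR (hv.1.mono hB)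
      (fun y hy => hv.localSubMeanAt (hU.mem_nhds (hB (ball_subset_closedBall hy)))) hh
      (fun y hy => (hs hy).ge) hx
  have hw : EqOn ((ball a R).piecewise h v) h (closedBall a R) := fun x hx => by
    by_cases hxB : x ∈ ball a R
    · exact piecewise_eq_of_mem _ _ _ hxB
    · rw [piecewise_eq_of_notMem _ _ _ hxB, hs (le_antisymm hx (not_lt.1 hxB))]
  refine ⟨_, hv.piecewise_ball hU hR hh.1 hs fun x hx => hle x (ball_subset_closedBall hx),
    hh.congr hw, fun x => ?_, fun x => piecewise_eq_of_notMem _ _ _⟩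
  by_cases hx : x ∈ ball a R
  · rw [piecewise_eq_of_mem _ _ _ hx]; exact hle x (ball_subset_closedBall hx)
  · rw [piecewise_eq_of_notMem _ _ _ hx]

end SubharmonicOperations

section PerronEnvelope

variable {d : ℕ} {Ω : Set (Euc d)} {s v w h : Euc d → ℝ} {a p x y : Euc d} {m M R r t δ ε : ℝ}

/-- Harnack's inequality, by comparing the means of `h` over the nested balls `B(x, t)` and
`B(y, t + |x - y|)`. -/
lemma HarmonicOnS.le_one_add_dist_div_pow_mul (hh : HarmonicOnS h (closedBall a R))
    (hpos : ∀ z ∈ closedBall a R, 0 ≤ h z) (ht : 0 < t)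
    (hsub : closedBall y (t + dist x y) ⊆ closedBall a R) :
    h x ≤ (1 + dist x y / t) ^ d * h y := by
  have hs : 0 < t + dist x y := add_pos_of_pos_of_nonneg ht dist_nonneg
  have hxy : ball x t ⊆ ball y (t + dist x y) := ball_subset_ball' le_rfl
  have hxy' : closedBall x t ⊆ closedBall y (t + dist x y) := closedBall_subset_closedBall' le_rfl
  have hmono : ∫ z in ball x t, h z ≤ ∫ z in ball y (t + dist x y), h z := by
    refine setIntegral_mono_set (integrableOn_ball (hh.1.1.mono hsub)) ?_ hxy.eventuallyLE
    filter_upwards [self_mem_ae_restrict measurableSet_ball] with z hz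
    exact hpos z (hsub (ball_subset_closedBall hz))
  have hvol : ∀ (z : Euc d) {ρ : ℝ}, 0 < ρ →
      volume.real (ball z ρ) = ρ ^ d * volume.real (ball (0 : Euc d) 1) := fun z ρ hρ => by
    simp [Measure.real, Measure.addHaar_ball_of_pos _ z hρ, hρ.le]
  rw [setIntegral_ball_eq_mul_setAverage h x ht, setIntegral_ball_eq_mul_setAverage h y hs,
    ← hh.eq_setAverage ht (hxy'.trans hsub), ← hh.eq_setAverage hs hsub, hvol x ht, hvol y hs,
    ← mul_assoc, ← mul_assoc] at hmono
  have hpow := le_of_mul_le_mul_right hmono (volume_real_ball_pos (0 : Euc d) one_pos)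
  rw [one_add_div ht.ne', div_pow, div_mul_eq_mul_div, le_div_iff₀ (pow_pos ht d)]
  linarith

lemma HarmonicOnS.sub_le_mul_pow_sub_one (hh : HarmonicOnS h (closedBall a R))
    (hm : ∀ z ∈ closedBall a R, m ≤ h z) (hM : ∀ z ∈ closedBall a R, h z ≤ M) (ht : 0 < t)
    (hsub : closedBall y (t + dist x y) ⊆ closedBall a R) :
    h x - h y ≤ (M - m) * ((1 + dist x y / t) ^ d - 1) := by
  have hharnack := (hh.add_const (-m)).le_one_add_dist_div_pow_mul
    (fun z hz => by linarith [hm z hz]) ht hsub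
  have hy : h y ≤ M := hM y (hsub (mem_closedBall_self (by positivity)))
  have hone : 1 ≤ (1 + dist x y / t) ^ d := one_le_pow₀ (le_add_of_nonneg_right (by positivity))
  calc h x - h y ≤ (h y - m) * ((1 + dist x y / t) ^ d - 1) := by linarith
    _ ≤ (M - m) * ((1 + dist x y / t) ^ d - 1) := by gcongr

/-- The Perron class of the boundary data of `s`: the subharmonic functions `s ≤ v ≤ M` on `Ω`
whose upper limits at the boundary are at most `s`. The bounds `s` and `M` make the envelope of the
class finite. -/
structure IsPerronSubsolution (Ω : Set (Euc d)) (s : Euc d → ℝ) (M : ℝ) (v : Euc d → ℝ) :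
    Prop where
  subharmonicOn : SubharmonicOn v Ω
  ge : ∀ x ∈ Ω, s x ≤ v x
  le : ∀ x ∈ Ω, v x ≤ M
  eventually_lt : ∀ ξ ∈ frontier Ω, ∀ c > s ξ, ∀ᶠ x in 𝓝[Ω] ξ, v x < c

/-- The upper envelope of the subharmonic functions in the Perron class of `s`. -/
def perronEnvelope (Ω : Set (Euc d)) (s : Euc d → ℝ) (M : ℝ) (x : Euc d) : ℝ :=
  ⨆ v : {v // IsPerronSubsolution Ω s M v}, v.1 x

namespace IsPerronSubsolution

lemma self (hs : SubharmonicOn s Ω) (hsc : ContinuousOn s (closure Ω)) (hsM : ∀ x ∈ Ω, s x ≤ M) :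
    IsPerronSubsolution Ω s M s where
  subharmonicOn := hs
  ge _ _ := le_rfl
  le := hsM
  eventually_lt ξ hξ _ hc :=
    ((hsc ξ (frontier_subset_closure hξ)).mono subset_closure).eventually_lt_const hc

lemma max (hv : IsPerronSubsolution Ω s M v) (hw : IsPerronSubsolution Ω s M w) :
    IsPerronSubsolution Ω s M fun x => max (v x) (w x) where
  subharmonicOn := hv.subharmonicOn.max hw.subharmonicOn
  ge x hx := (hv.ge x hx).trans (le_max_left _ _)
  le x hx := max_le (hv.le x hx) (hw.le x hx)
  eventually_lt ξ hξ c hc := by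
    filter_upwards [hv.eventually_lt ξ hξ c hc, hw.eventually_lt ξ hξ c hc] with x using max_lt

lemma exists_harmonicOnS_closedBall [NeZero d] (hΩ : IsOpen Ω) (hv : IsPerronSubsolution Ω s M v)
    (hR : 0 < R) (hB : closedBall a R ⊆ Ω) :
    ∃ w, IsPerronSubsolution Ω s M w ∧ HarmonicOnS w (closedBall a R) ∧ ∀ x, v x ≤ w x := by
  obtain ⟨w, hw, hharm, hvw, heq⟩ := hv.subharmonicOn.exists_poissonModification hΩ hR hB
  refine ⟨w, ⟨hw, fun x hx => (hv.ge x hx).trans (hvw x), fun x hx => ?_, fun ξ hξ c hc => ?_⟩,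
    hharm, hvw⟩
  · by_cases hxB : x ∈ ball a R
    · refine le_of_localSubMeanAt_of_forall_sphere_le hR hharm.1.1 (fun y hy => ?_) (fun y hy => ?_)
        (ball_subset_closedBall hxB)
      · exact hw.localSubMeanAt (hΩ.mem_nhds (hB (ball_subset_closedBall hy)))
      · rw [heq y fun hyB => (mem_ball.1 hyB).ne hy]
        exact hv.le y (hB (sphere_subset_closedBall hy))
    · exact (heq x hxB).trans_le (hv.le x hx)
  · have hξB : ξ ∉ closedBall a R := fun h => (hΩ.frontier_eq ▸ hξ).2 (hB h)
    filter_upwards [hv.eventually_lt ξ hξ c hc, mem_nhdsWithin_of_mem_nhds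
      (isClosed_closedBall.isOpen_compl.mem_nhds hξB)] with x hx hxB
    rwa [heq x fun h => hxB (ball_subset_closedBall h)]

lemma le_perronEnvelope (hv : IsPerronSubsolution Ω s M v) (hx : x ∈ Ω) :
    v x ≤ perronEnvelope Ω s M x :=
  le_ciSup (f := fun v : {v // IsPerronSubsolution Ω s M v} => v.1 x)
    ⟨M, by rintro _ ⟨v, rfl⟩; exact v.2.le x hx⟩ ⟨v, hv⟩

lemma perronEnvelope_le {c : ℝ} (hs : IsPerronSubsolution Ω s M s)
    (hc : ∀ v, IsPerronSubsolution Ω s M v → v x ≤ c) : perronEnvelope Ω s M x ≤ c :=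
  have : Nonempty {v // IsPerronSubsolution Ω s M v} := ⟨⟨s, hs⟩⟩
  ciSup_le fun v => hc v.1 v.2

lemma exists_perronEnvelope_sub_lt (hs : IsPerronSubsolution Ω s M s) (x : Euc d) (hε : 0 < ε) :
    ∃ v, IsPerronSubsolution Ω s M v ∧ perronEnvelope Ω s M x - ε < v x := by
  by_contra! hcon
  linarith [hs.perronEnvelope_le hcon]

variable [NeZero d]

lemma perronEnvelope_sub_le (hΩ : IsOpen Ω) (hs : IsPerronSubsolution Ω s M s)
    (hm : ∀ x ∈ Ω, m ≤ s x) (hR : 0 < R) (hB : closedBall a R ⊆ Ω) (ht : 0 < t)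
    (hsub : closedBall y (t + dist x y) ⊆ closedBall a R) :
    perronEnvelope Ω s M x - perronEnvelope Ω s M y ≤
      (M - m) * ((1 + dist x y / t) ^ d - 1) := by
  rw [sub_le_iff_le_add]
  refine hs.perronEnvelope_le fun v hv => ?_
  obtain ⟨w, hw, hharm, hvw⟩ := hv.exists_harmonicOnS_closedBall hΩ hR hB
  have hharnack := hharm.sub_le_mul_pow_sub_one (fun z hz => (hm z (hB hz)).trans (hw.ge z (hB hz)))
    (fun z hz => hw.le z (hB hz)) ht hsub
  have hy : y ∈ Ω := hB (hsub (mem_closedBall_self (by positivity)))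
  linarith [hvw x, hw.le_perronEnvelope hy]

lemma continuousOn_perronEnvelope (hΩ : IsOpen Ω) (hs : IsPerronSubsolution Ω s M s)
    (hm : ∀ x ∈ Ω, m ≤ s x) : ContinuousOn (perronEnvelope Ω s M) Ω := by
  refine fun a ha => ContinuousAt.continuousWithinAt ?_
  obtain ⟨R, hR, hB⟩ := Metric.nhds_basis_closedBall.mem_iff.1 (hΩ.mem_nhds ha)
  have hR3 : 0 < R / 3 := by positivity
  have hmodulus : Tendsto (fun x => (M - m) * ((1 + dist x a / (R / 3)) ^ d - 1)) (𝓝 a) (𝓝 0) := by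
    have : Continuous fun x => (M - m) * ((1 + dist x a / (R / 3)) ^ d - 1) := by fun_prop
    simpa using this.tendsto a
  refine tendsto_iff_dist_tendsto_zero.2
    (squeeze_zero' (.of_forall fun _ => dist_nonneg) ?_ hmodulus)
  filter_upwards [ball_mem_nhds a hR3] with x hx
  rw [mem_ball] at hx
  refine abs_sub_le_iff.2 ⟨hs.perronEnvelope_sub_le hΩ hm hR hB hR3 ?_, ?_⟩
  · exact closedBall_subset_closedBall (by linarith)
  · rw [dist_comm x a]
    refine hs.perronEnvelope_sub_le hΩ hm hR hB hR3 (closedBall_subset_closedBall' ?_)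
    rw [dist_comm a x]
    linarith

lemma exists_forall_perronEnvelope_sub_lt (hΩ : IsOpen Ω) (hs : IsPerronSubsolution Ω s M s)
    (hm : ∀ x ∈ Ω, m ≤ s x) {K : Set (Euc d)} (hK : IsCompact K) (hKΩ : K ⊆ Ω) (hε : 0 < ε) :
    ∃ v, IsPerronSubsolution Ω s M v ∧ ∀ x ∈ K, perronEnvelope Ω s M x - ε < v x := by
  refine hK.induction_on
    (p := fun K => ∃ v, IsPerronSubsolution Ω s M v ∧ ∀ x ∈ K, perronEnvelope Ω s M x - ε < v x)
    ⟨s, hs, by simp⟩ ?_ ?_ fun x hx => ?_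
  · rintro K L hKL ⟨v, hv, hvL⟩
    exact ⟨v, hv, fun x hx => hvL x (hKL hx)⟩
  · rintro K L ⟨v, hv, hvK⟩ ⟨w, hw, hwL⟩
    refine ⟨_, hv.max hw, fun x hx => ?_⟩
    exact hx.elim (fun hx => lt_max_of_lt_left (hvK x hx)) fun hx => lt_max_of_lt_right (hwL x hx)
  · obtain ⟨v, hv, hvx⟩ := hs.exists_perronEnvelope_sub_lt x hε
    have hxΩ : Ω ∈ 𝓝 x := hΩ.mem_nhds (hKΩ hx)
    have hcont := (hs.continuousOn_perronEnvelope hΩ hm).continuousAt hxΩ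
    exact ⟨_, mem_nhdsWithin_of_mem_nhds ((hcont.sub continuousAt_const).eventually_lt
      (hv.subharmonicOn.1.continuousAt hxΩ) hvx), v, hv, fun _ hz => hz⟩

theorem subharmonicOn_neg_perronEnvelope (hΩ : IsOpen Ω) (hs : IsPerronSubsolution Ω s M s)
    (hm : ∀ x ∈ Ω, m ≤ s x) : SubharmonicOn (fun x => -perronEnvelope Ω s M x) Ω := by
  have hcont := hs.continuousOn_perronEnvelope hΩ hm
  refine ⟨hcont.neg, fun x hx r hr hsub => ?_⟩
  rw [setAverage_ball_neg, neg_le_neg_iff]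
  refine le_of_forall_pos_le_add fun ε hε => ?_
  obtain ⟨v, hv, hve⟩ :=
    hs.exists_forall_perronEnvelope_sub_lt hΩ hm (isCompact_closedBall x r) hsub hε
  obtain ⟨w, hw, hharm, hvw⟩ := hv.exists_harmonicOnS_closedBall hΩ hr hsub
  have hharm' := hharm.add_const ε
  calc ⨍ y in ball x r, perronEnvelope Ω s M y ≤ ⨍ y in ball x r, (w y + ε) :=
        setAverage_ball_mono (hcont.mono hsub) hharm'.1.1 fun y hy => by
          linarith [hve y (ball_subset_closedBall hy), hvw y]
    _ = w x + ε := (hharm'.eq_setAverage hr subset_rfl).symm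
    _ ≤ perronEnvelope Ω s M x + ε := by gcongr; exact hw.le_perronEnvelope hx

end IsPerronSubsolution

end PerronEnvelope

section BoundedUpperFunctions

variable {d : ℕ} {Ω E F : Set (Euc d)} {f g u w : Euc d → ℝ} {p : Euc d} {c ε : ℝ}

/-- The bounded members of the upper Perron class of `f`, with the boundary condition written
without `liminf`. -/
structure IsBoundedUpper (Ω : Set (Euc d)) (f u : Euc d → ℝ) : Prop where
  subharmonicOn_neg : SubharmonicOn (fun x => -u x) Ω
  bounded : ∃ M, ∀ x ∈ Ω, |u x| ≤ M
  eventually_lt : ∀ ξ ∈ frontier Ω, ∀ c < f ξ, ∀ᶠ x in 𝓝[Ω] ξ, c < u x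

namespace IsBoundedUpper

lemma mem_upperFamily (hu : IsBoundedUpper Ω f u) : u ∈ upperFamily Ω f := by
  obtain ⟨M, hM⟩ := hu.bounded
  refine ⟨hu.subharmonicOn_neg, ⟨-M, ?_⟩, fun ξ hξ => le_of_forall_lt fun c hc => ?_⟩
  · rintro _ ⟨x, hx, rfl⟩
    exact (abs_le.1 (hM x hx)).1
  · have : (𝓝[Ω] ξ).NeBot :=
      mem_closure_iff_nhdsWithin_neBot.1 (frontier_subset_closure hξ)
    have hbdd : IsBoundedUnder (· ≤ ·) (𝓝[Ω] ξ) u :=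
      isBoundedUnder_of_eventually_le (a := M)
        (eventually_mem_nhdsWithin.mono fun x hx => (abs_le.1 (hM x hx)).2)
    obtain ⟨b, hcb, hb⟩ := exists_between hc
    exact hcb.trans_le (le_liminf_of_le hbdd.isCoboundedUnder_ge
      ((hu.eventually_lt ξ hξ b hb).mono fun _ => le_of_lt))

lemma min_const (hu : u ∈ upperFamily Ω f) (hf : ∀ ξ ∈ frontier Ω, f ξ ≤ c) :
    IsBoundedUpper Ω f fun x => min (u x) c := by
  obtain ⟨hsub, ⟨m, hm⟩, hlim⟩ := hu
  have hm' : ∀ x ∈ Ω, m ≤ u x := fun x hx => hm ⟨x, hx, rfl⟩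
  refine ⟨?_, ⟨|m| + |c|, fun x hx => abs_le.2 ⟨?_, ?_⟩⟩, fun ξ hξ b hb => ?_⟩
  · simpa only [max_neg_neg] using hsub.max (subharmonicOn_const (-c) Ω)
  · refine le_min (le_trans ?_ (hm' x hx)) ?_ <;>
      linarith [neg_abs_le m, neg_abs_le c, abs_nonneg m, abs_nonneg c]
  · exact (min_le_right _ _).trans (by linarith [le_abs_self c, abs_nonneg m])
  · have hbdd : IsBoundedUnder (· ≥ ·) (𝓝[Ω] ξ) u :=
      isBoundedUnder_of_eventually_ge (eventually_mem_nhdsWithin.mono hm')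
    filter_upwards [eventually_lt_of_lt_liminf (hb.trans_le (hlim ξ hξ)) hbdd] with x hx
    exact lt_min hx (hb.trans_le (hf ξ hξ))

lemma const (Ω : Set (Euc d)) (c : ℝ) : IsBoundedUpper Ω (fun _ => c) fun _ => c :=
  ⟨subharmonicOn_const (-c) Ω, ⟨|c|, fun _ _ => le_rfl⟩, fun _ _ _ hb => .of_forall fun _ => hb⟩

lemma anti (hu : IsBoundedUpper Ω g u) (hfg : ∀ x, f x ≤ g x) : IsBoundedUpper Ω f u :=
  ⟨hu.subharmonicOn_neg, hu.bounded, fun ξ hξ c hc =>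
    hu.eventually_lt ξ hξ c (hc.trans_le (hfg ξ))⟩

lemma add (hu : IsBoundedUpper Ω f u) (hw : IsBoundedUpper Ω g w) :
    IsBoundedUpper Ω (fun x => f x + g x) fun x => u x + w x := by
  obtain ⟨M, hM⟩ := hu.bounded
  obtain ⟨N, hN⟩ := hw.bounded
  refine ⟨?_, ⟨M + N, fun x hx => (abs_add_le _ _).trans (add_le_add (hM x hx) (hN x hx))⟩,
    fun ξ hξ c hc => ?_⟩
  · simpa only [neg_add] using hu.subharmonicOn_neg.add hw.subharmonicOn_neg
  · filter_upwards [hu.eventually_lt ξ hξ (f ξ - (f ξ + g ξ - c) / 2) (by linarith),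
      hw.eventually_lt ξ hξ (g ξ - (f ξ + g ξ - c) / 2) (by linarith)] with x hux hwx
    linarith

lemma const_mul (hc : 0 < c) (hu : IsBoundedUpper Ω f u) :
    IsBoundedUpper Ω (fun x => c * f x) fun x => c * u x := by
  obtain ⟨M, hM⟩ := hu.bounded
  refine ⟨?_, ⟨c * M, fun x hx => ?_⟩, fun ξ hξ b hb => ?_⟩
  · simpa only [mul_neg] using hu.subharmonicOn_neg.const_mul hc.le
  · rw [abs_mul, abs_of_pos hc]
    exact mul_le_mul_of_nonneg_left (hM x hx) hc.le
  · filter_upwards [hu.eventually_lt ξ hξ (b / c) ((div_lt_iff₀' hc).2 hb)] with x hx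
    exact (div_lt_iff₀' hc).1 hx

lemma sum {ι : Type*} (S : Finset ι) {f u : ι → Euc d → ℝ}
    (hu : ∀ i ∈ S, IsBoundedUpper Ω (f i) (u i)) :
    IsBoundedUpper Ω (fun x => ∑ i ∈ S, f i x) fun x => ∑ i ∈ S, u i x := by
  induction S using Finset.cons_induction with
  | empty => simpa using const Ω 0
  | cons i S _ ih =>
    simp only [Finset.sum_cons]
    exact (hu i (by simp)).add (ih fun j hj => hu j (by simp [hj]))

end IsBoundedUpper

/-- The minimum principle at `p` for bounded superharmonic functions with nonnegative boundary
limits. It can fail because `Ω` may be unbounded or have empty boundary. -/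
def MinimumPrincipleAt (Ω : Set (Euc d)) (p : Euc d) : Prop :=
  ∀ u, IsBoundedUpper Ω (fun _ => 0) u → 0 ≤ u p

/-- If the minimum principle fails, the upper class is unbounded below at `p` and its `sInf` takes
the junk value `0`. -/
lemma minimumPrincipleAt_of_hMeasure_pos (h : 0 < hMeasure Ω p E) : MinimumPrincipleAt Ω p := by
  intro u hu
  by_contra! hneg
  refine h.ne' (Real.sInf_of_not_bddBelow ?_)
  rintro ⟨m, hm⟩
  have hle : ∀ k : ℝ, 0 < k → m ≤ 1 + k * u p := fun k hk => by
    have hmem : IsBoundedUpper Ω (E.indicator fun _ => 1) fun x => 1 + k * u x :=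
      ((IsBoundedUpper.const Ω 1).add (hu.const_mul hk)).anti fun x => by
        simpa using indicator_le_self' (f := fun _ : Euc d => (1 : ℝ)) (by simp) x
    exact hm ⟨_, hmem.mem_upperFamily, rfl⟩
  have := hle ((|m| + 2) / -u p) (div_pos (by positivity) (neg_pos.2 hneg))
  rw [div_neg, neg_mul, div_mul_cancel₀ _ hneg.ne] at this
  linarith [neg_abs_le m]

lemma isBoundedUpper_indicator_one (Ω E : Set (Euc d)) :
    IsBoundedUpper Ω (E.indicator fun _ => 1) fun _ => 1 :=
  (IsBoundedUpper.const Ω 1).anti (indicator_le_self' (by simp))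

lemma exists_isBoundedUpper_lt_hMeasure_add (Ω : Set (Euc d)) (p : Euc d) (E : Set (Euc d))
    (hε : 0 < ε) : ∃ u, IsBoundedUpper Ω (E.indicator fun _ => 1) u ∧ u p < hMeasure Ω p E + ε := by
  obtain ⟨_, ⟨u, hu, rfl⟩, hlt⟩ := exists_lt_of_csInf_lt
    (s := (fun u => u p) '' upperFamily Ω (E.indicator fun _ => 1))
    ⟨_, _, (isBoundedUpper_indicator_one Ω E).mem_upperFamily, rfl⟩ (lt_add_of_pos_right _ hε)
  exact ⟨_, .min_const hu fun ξ _ => indicator_le_self' (by simp) ξ,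
    (min_le_left _ _).trans_lt hlt⟩

namespace MinimumPrincipleAt

variable (hp : MinimumPrincipleAt Ω p)
include hp

lemma zero_mem_lowerBounds (E : Set (Euc d)) :
    0 ∈ lowerBounds ((fun u => u p) '' upperFamily Ω (E.indicator fun _ => 1)) := by
  rintro _ ⟨u, hu, rfl⟩
  exact (hp _ ((IsBoundedUpper.min_const hu fun ξ _ => indicator_le_self' (by simp) ξ).anti
    (indicator_nonneg (by simp)))).trans (min_le_left _ _)

lemma hMeasure_le (hu : IsBoundedUpper Ω (E.indicator fun _ => 1) u) : hMeasure Ω p E ≤ u p :=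
  csInf_le ⟨0, hp.zero_mem_lowerBounds E⟩ ⟨u, hu.mem_upperFamily, rfl⟩

lemma hMeasure_nonneg (E : Set (Euc d)) : 0 ≤ hMeasure Ω p E :=
  le_csInf ⟨_, _, (isBoundedUpper_indicator_one Ω E).mem_upperFamily, rfl⟩
    (hp.zero_mem_lowerBounds E)

lemma hMeasure_le_one (E : Set (Euc d)) : hMeasure Ω p E ≤ 1 :=
  hp.hMeasure_le (isBoundedUpper_indicator_one Ω E)

lemma hMeasure_mono (hEF : E ⊆ F) : hMeasure Ω p E ≤ hMeasure Ω p F := by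
  refine le_of_forall_pos_le_add fun ε hε => ?_
  obtain ⟨u, hu, hlt⟩ := exists_isBoundedUpper_lt_hMeasure_add Ω p F hε
  exact (hp.hMeasure_le (hu.anti
    (indicator_le_indicator_of_subset hEF fun _ => zero_le_one))).trans hlt.le

lemma hMeasure_union_le (E F : Set (Euc d)) :
    hMeasure Ω p (E ∪ F) ≤ hMeasure Ω p E + hMeasure Ω p F := by
  refine le_of_forall_pos_le_add fun ε hε => ?_
  obtain ⟨u, hu, hult⟩ := exists_isBoundedUpper_lt_hMeasure_add Ω p E (half_pos hε)
  obtain ⟨w, hw, hwlt⟩ := exists_isBoundedUpper_lt_hMeasure_add Ω p F (half_pos hε)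
  have hle := hp.hMeasure_le (E := E ∪ F) ((hu.add hw).anti fun x => by
    by_cases hE : x ∈ E <;> by_cases hF : x ∈ F <;> simp [hE, hF])
  linarith

lemma hMeasure_empty : hMeasure Ω p ∅ = 0 :=
  (hp.hMeasure_le ((IsBoundedUpper.const Ω 0).anti (by simp))).antisymm (hp.hMeasure_nonneg ∅)

lemma hMeasure_biUnion_le {ι : Type*} (S : Finset ι) (E : ι → Set (Euc d)) :
    hMeasure Ω p (⋃ i ∈ S, E i) ≤ ∑ i ∈ S, hMeasure Ω p (E i) := by
  induction S using Finset.cons_induction with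
  | empty => simp [hp.hMeasure_empty]
  | cons i S _ ih =>
    rw [Finset.sum_cons]
    simp only [Finset.mem_cons, iUnion_iUnion_eq_or_left]
    exact (hp.hMeasure_union_le _ _).trans (by gcongr)

end MinimumPrincipleAt

end BoundedUpperFunctions

section Resolutivity

variable {d : ℕ} {Ω : Set (Euc d)} {f g s : Euc d → ℝ} {p : Euc d} {c m M : ℝ}

/-- Wiener resolutivity of the boundary function `f` at the point `p`: `f` has bounded upper and
lower functions, `u` and `-w`, that are arbitrarily close at `p`. -/
def ResolutiveAt (Ω : Set (Euc d)) (p : Euc d) (f : Euc d → ℝ) : Prop :=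
  ∀ ε > 0, ∃ u w, IsBoundedUpper Ω f u ∧ IsBoundedUpper Ω (fun x => -f x) w ∧ u p + w p ≤ ε

lemma ResolutiveAt.neg (hf : ResolutiveAt Ω p f) : ResolutiveAt Ω p fun x => -f x := by
  intro ε hε
  obtain ⟨u, w, hu, hw, hle⟩ := hf ε hε
  exact ⟨w, u, hw, by simpa only [neg_neg] using hu, by rwa [add_comm]⟩

lemma ResolutiveAt.add (hf : ResolutiveAt Ω p f) (hg : ResolutiveAt Ω p g) :
    ResolutiveAt Ω p fun x => f x + g x := by
  intro ε hε
  obtain ⟨u, w, hu, hw, hle⟩ := hf (ε / 2) (half_pos hε)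
  obtain ⟨u', w', hu', hw', hle'⟩ := hg (ε / 2) (half_pos hε)
  exact ⟨_, _, hu.add hu', by simpa only [neg_add] using hw.add hw', by linarith⟩

lemma ResolutiveAt.const_mul (hc : 0 < c) (hf : ResolutiveAt Ω p f) :
    ResolutiveAt Ω p fun x => c * f x := by
  intro ε hε
  obtain ⟨u, w, hu, hw, hle⟩ := hf (ε / c) (div_pos hε hc)
  refine ⟨_, _, hu.const_mul hc, by simpa only [mul_neg] using hw.const_mul hc, ?_⟩
  rwa [← mul_add, ← le_div_iff₀' hc]

theorem SubharmonicOn.resolutiveAt [NeZero d] (hs : SubharmonicOn s Ω) (hΩ : IsOpen Ω)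
    (hsc : ContinuousOn s (closure Ω)) (hm : ∀ x ∈ Ω, m ≤ s x) (hM : ∀ x ∈ Ω, s x ≤ M)
    (p : Euc d) : ResolutiveAt Ω p s := by
  intro ε hε
  have hself := IsPerronSubsolution.self hs hsc hM
  obtain ⟨v, hv, hvp⟩ := hself.exists_perronEnvelope_sub_lt p hε
  have hbound : ∀ {t x}, x ∈ Ω → s x ≤ t → t ≤ M → |t| ≤ |m| + |M| := fun {t x} hx hst htM =>
    abs_le.2 ⟨by linarith [hm x hx, neg_abs_le m, abs_nonneg M],
      by linarith [le_abs_self M, abs_nonneg m]⟩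
  refine ⟨perronEnvelope Ω s M, fun x => -v x, ⟨hself.subharmonicOn_neg_perronEnvelope hΩ hm,
    ⟨|m| + |M|, fun x hx => ?_⟩, fun ξ hξ c hc => ?_⟩, ⟨?_, ⟨|m| + |M|, fun x hx => ?_⟩,
    fun ξ hξ c hc => ?_⟩, by linarith⟩
  · exact hbound hx (hself.le_perronEnvelope hx) (hself.perronEnvelope_le fun v hv => hv.le x hx)
  · filter_upwards [((hsc ξ (frontier_subset_closure hξ)).mono subset_closure).eventually_const_lt
      hc, self_mem_nhdsWithin] with x hcx hx
    exact hcx.trans_le (hself.le_perronEnvelope hx)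
  · simpa only [neg_neg] using hv.subharmonicOn
  · rw [abs_neg]
    exact hbound hx (hv.ge x hx) (hv.le x hx)
  · exact (hv.eventually_lt ξ hξ (-c) (lt_neg.1 hc)).mono fun x hx => lt_neg.2 hx

theorem MinimumPrincipleAt.sum_hMeasure_le_one (hp : MinimumPrincipleAt Ω p) {ι : Type*}
    {S : Finset ι} {E : ι → Set (Euc d)} {φ : ι → Euc d → ℝ}
    (hφ : ∀ i ∈ S, ResolutiveAt Ω p (φ i))
    (hE : ∀ i ∈ S, ∀ x, (E i).indicator (fun _ => 1) x ≤ φ i x) (hsum : ∀ x, ∑ i ∈ S, φ i x ≤ 1) :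
    ∑ i ∈ S, hMeasure Ω p (E i) ≤ 1 := by
  rcases S.eq_empty_or_nonempty with rfl | hS
  · simp
  refine le_of_forall_pos_le_add fun ε hε => ?_
  have hcard : (0 : ℝ) < S.card := by exact_mod_cast hS.card_pos
  choose! u w hu hw hle using fun i hi => hφ i hi (ε / S.card) (div_pos hε hcard)
  have hlower : 0 ≤ 1 + ∑ i ∈ S, w i p :=
    hp _ (((IsBoundedUpper.const Ω 1).add (IsBoundedUpper.sum S hw)).anti fun x => by
      rw [Finset.sum_neg_distrib]; linarith [hsum x])
  calc ∑ i ∈ S, hMeasure Ω p (E i) ≤ ∑ i ∈ S, (ε / S.card - w i p) :=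
        Finset.sum_le_sum fun i hi => by
          linarith [hp.hMeasure_le ((hu i hi).anti (hE i hi)), hle i hi]
    _ = ε - ∑ i ∈ S, w i p := by
        rw [Finset.sum_sub_distrib, Finset.sum_const, nsmul_eq_mul, mul_div_cancel₀ _ hcard.ne']
    _ ≤ 1 + ε := by linarith

end Resolutivity

section KernelCutoff

open scoped Laplacian RealInnerProductSpace

/-- The Newton kernel of `ℝ³`, regularized at scale `r`, as a function of the distance `t` to the
pole. It is superharmonic in every dimension at least `3`. -/
def softKernel (r t : ℝ) : ℝ := (r ^ 2 + t ^ 2) ^ (-(1 / 2) : ℝ)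

lemma strictAntiOn_softKernel {r : ℝ} (hr : 0 < r) : StrictAntiOn (softKernel r) (Ici 0) :=
  fun s hs t _ hst => Real.rpow_lt_rpow_of_neg (by positivity)
    (by gcongr) (by norm_num)

section InnerProductSpace

variable {E : Type*} [NormedAddCommGroup E] [InnerProductSpace ℝ E] {r : ℝ}

lemma contDiff_softKernel_dist (hr : 0 < r) (z : E) {k : WithTop ℕ∞} :
    ContDiff ℝ k fun x => softKernel r (dist x z) := by
  simp only [softKernel, dist_eq_norm]
  exact (contDiff_const.add ((contDiff_id.sub contDiff_const).norm_sq ℝ)).rpow_const_of_ne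
    fun x => by positivity

lemma hasFDerivAt_sq_add_norm_sub_sq_rpow (hr : 0 < r) (z x : E) (e : ℝ) :
    HasFDerivAt (fun y => (r ^ 2 + ‖y - z‖ ^ 2) ^ e)
      ((2 * e * (r ^ 2 + ‖x - z‖ ^ 2) ^ (e - 1)) • innerSL ℝ (x - z)) x := by
  have hsq : HasFDerivAt (fun y => r ^ 2 + ‖y - z‖ ^ 2) (2 • innerSL ℝ (x - z)) x := by
    simpa using (((hasFDerivAt_id x).sub_const z).norm_sq).const_add (r ^ 2)
  convert hsq.rpow_const (p := e) (.inl (by positivity)) using 1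
  rw [two_smul, ← two_smul ℝ, smul_smul]
  ring_nf

lemma fderiv_neg_softKernel_dist (hr : 0 < r) (z x e : E) :
    fderiv ℝ (fun y => -softKernel r (dist y z)) x e =
      (r ^ 2 + ‖x - z‖ ^ 2) ^ (-(3 / 2) : ℝ) * ⟪x - z, e⟫ := by
  simp only [softKernel, dist_eq_norm]
  rw [(hasFDerivAt_sq_add_norm_sub_sq_rpow hr z x _).fun_neg.fderiv,
    show (-(1 / 2) : ℝ) - 1 = -(3 / 2) by norm_num]
  simp only [neg_apply, smul_apply, innerSL_apply_apply,
    smul_eq_mul]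
  ring

lemma fderiv_rpow_mul_inner (hr : 0 < r) (z x e : E) :
    fderiv ℝ (fun y => (r ^ 2 + ‖y - z‖ ^ 2) ^ (-(3 / 2) : ℝ) * ⟪y - z, e⟫) x e =
      (r ^ 2 + ‖x - z‖ ^ 2) ^ (-(5 / 2) : ℝ) *
        ((r ^ 2 + ‖x - z‖ ^ 2) * ‖e‖ ^ 2 - 3 * ⟪x - z, e⟫ ^ 2) := by
  have hinner : HasFDerivAt (fun y => ⟪y - z, e⟫) (innerSL ℝ e) x := by
    simpa only [innerSL_apply_apply, real_inner_comm, ContinuousLinearMap.comp_id] using!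
      (innerSL ℝ e).hasFDerivAt.comp x ((hasFDerivAt_id x).sub_const z)
  have hpow : (r ^ 2 + ‖x - z‖ ^ 2) ^ (-(3 / 2) : ℝ) =
      (r ^ 2 + ‖x - z‖ ^ 2) * (r ^ 2 + ‖x - z‖ ^ 2) ^ (-(5 / 2) : ℝ) := by
    rw [show (-(3 / 2) : ℝ) = 1 + -(5 / 2) by norm_num, Real.rpow_add (by positivity),
      Real.rpow_one]
  rw [((hasFDerivAt_sq_add_norm_sub_sq_rpow hr z x _).fun_mul hinner).fderiv,
    show (-(3 / 2) : ℝ) - 1 = -(5 / 2) by norm_num, hpow]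
  simp only [add_apply, smul_apply, innerSL_apply_apply,
    smul_eq_mul, real_inner_self_eq_norm_sq]
  ring

lemma laplacian_neg_softKernel_dist_nonneg [FiniteDimensional ℝ E] (hr : 0 < r)
    (hE : 3 ≤ Module.finrank ℝ E) (z x : E) : 0 ≤ Δ (fun y => -softKernel r (dist y z)) x := by
  let b := stdOrthonormalBasis ℝ E
  have hsum : ∑ i, ⟪x - z, b i⟫ ^ 2 = ‖x - z‖ ^ 2 := by
    rw [← b.sum_sq_norm_inner_right]
    simp [real_inner_comm]
  have hdim : (3 : ℝ) ≤ Module.finrank ℝ E := by exact_mod_cast hE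
  rw [laplacian_eq_sum_fderiv_fderiv (contDiff_softKernel_dist hr z).neg b]
  simp only [fderiv_neg_softKernel_dist hr, fderiv_rpow_mul_inner hr, b.norm_eq_one, one_pow,
    mul_one]
  rw [← Finset.mul_sum, Finset.sum_sub_distrib, ← Finset.mul_sum, hsum, Finset.sum_const,
    Finset.card_univ, Fintype.card_fin, nsmul_eq_mul]
  refine mul_nonneg (by positivity) ?_
  nlinarith [sq_nonneg r, sq_nonneg ‖x - z‖]

end InnerProductSpace

variable {d : ℕ} {r : ℝ}

lemma subharmonicOn_neg_softKernel_dist (hd : 3 ≤ d) (hr : 0 < r) (z : Euc d) (U : Set (Euc d)) :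
    SubharmonicOn (fun x => -softKernel r (dist x z)) U := by
  have : Nonempty (Fin d) := ⟨⟨0, by lia⟩⟩
  exact ⟨(contDiff_softKernel_dist hr z (k := 2)).continuous.neg.continuousOn, fun x _ ρ hρ _ =>
    le_setAverage_ball_of_laplacian_nonneg (contDiff_softKernel_dist hr z).neg
      (laplacian_neg_softKernel_dist_nonneg hr (by simpa using hd) z) x hρ⟩

lemma resolutiveAt_min_softKernel_dist (hd : 3 ≤ d) {Ω : Set (Euc d)} (hΩ : IsOpen Ω) (hr : 0 < r)
    (z p : Euc d) {a : ℝ} (ha : 0 ≤ a) :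
    ResolutiveAt Ω p fun x => min (softKernel r (dist x z)) a := by
  have : NeZero d := ⟨by lia⟩
  have hs : SubharmonicOn (fun x => max (-softKernel r (dist x z)) (-a)) Ω :=
    (subharmonicOn_neg_softKernel_dist hd hr z Ω).max (subharmonicOn_const (-a) Ω)
  have hcont : Continuous fun x => max (-softKernel r (dist x z)) (-a) :=
    (contDiff_softKernel_dist hr z (k := 0)).continuous.neg.max continuous_const
  have hnonneg : ∀ x, 0 ≤ softKernel r (dist x z) := fun x => by
    unfold softKernel
    positivity
  simpa only [max_neg_neg, neg_neg] using (hs.resolutiveAt hΩ hcont.continuousOn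
    (fun x _ => le_max_right _ _)
    (fun x _ => max_le (neg_nonpos.2 (hnonneg x)) (neg_nonpos.2 ha)) p).neg

/-- A cutoff that is `1` on `closedBall z r` and `0` off `ball z (2 * r)`, built as the normalized
difference of two truncations of `softKernel`. Unlike a smooth cutoff it is a difference of
superharmonic functions, and hence resolutive for the Perron method. -/
def kernelCutoff {X : Type*} [PseudoMetricSpace X] (z : X) (r : ℝ) (x : X) : ℝ :=
  (softKernel r r - softKernel r (2 * r))⁻¹ *
    (min (softKernel r (dist x z)) (softKernel r r) -
      min (softKernel r (dist x z)) (softKernel r (2 * r)))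

lemma resolutiveAt_kernelCutoff (hd : 3 ≤ d) {Ω : Set (Euc d)} (hΩ : IsOpen Ω) (hr : 0 < r)
    (z p : Euc d) : ResolutiveAt Ω p (kernelCutoff z r) := by
  have hpos : ∀ t, 0 ≤ softKernel r t := fun t => by
    unfold softKernel
    positivity
  have hres := fun t => resolutiveAt_min_softKernel_dist hd hΩ hr z p (hpos t)
  have hlt := strictAntiOn_softKernel hr hr.le (by simpa using hr.le : 0 ≤ 2 * r) (by linarith)
  simpa only [kernelCutoff, ← sub_eq_add_neg] using!
    ((hres r).add (hres (2 * r)).neg).const_mul (inv_pos.2 (sub_pos.2 hlt))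

section PseudoMetricSpace

variable {X : Type*} [PseudoMetricSpace X]

lemma kernelCutoff_eq_one (hr : 0 < r) {x z : X} (hx : dist x z ≤ r) :
    kernelCutoff z r x = 1 := by
  have hlt := strictAntiOn_softKernel hr hr.le (by simpa using hr.le : 0 ≤ 2 * r) (by linarith)
  have hle : softKernel r r ≤ softKernel r (dist x z) :=
    (strictAntiOn_softKernel hr).antitoneOn dist_nonneg hr.le hx
  rw [kernelCutoff, min_eq_right hle, min_eq_right (hlt.le.trans hle)]
  exact inv_mul_cancel₀ (sub_pos.2 hlt).ne'

lemma kernelCutoff_eq_zero (hr : 0 < r) {x z : X} (hx : 2 * r ≤ dist x z) :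
    kernelCutoff z r x = 0 := by
  have hlt := strictAntiOn_softKernel hr hr.le (by simpa using hr.le : 0 ≤ 2 * r) (by linarith)
  have hle : softKernel r (dist x z) ≤ softKernel r (2 * r) :=
    (strictAntiOn_softKernel hr).antitoneOn (by simpa using hr.le : 0 ≤ 2 * r) dist_nonneg hx
  rw [kernelCutoff, min_eq_left hle, min_eq_left (hle.trans hlt.le), sub_self, mul_zero]

lemma kernelCutoff_mem_Icc (hr : 0 < r) (z x : X) : kernelCutoff z r x ∈ Icc 0 1 := by
  have hlt := strictAntiOn_softKernel hr hr.le (by simpa using hr.le : 0 ≤ 2 * r) (by linarith)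
  have hpos := sub_pos.2 hlt
  refine ⟨mul_nonneg (inv_nonneg.2 hpos.le)
    (sub_nonneg.2 (min_le_min_left _ hlt.le)), ?_⟩
  rw [kernelCutoff, inv_mul_le_iff₀ hpos, mul_one]
  rcases le_total (softKernel r (dist x z)) (softKernel r (2 * r)) with h | h
  · rw [min_eq_left h, min_eq_left (h.trans hlt.le)]
    linarith
  · rw [min_eq_right h]
    linarith [min_le_right (softKernel r (dist x z)) (softKernel r r)]

end PseudoMetricSpace

/-- No resolutivity of the sets `E i` is available, so superadditivity is obtained from resolutive
cutoffs that still sum to at most `1`. -/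
lemma MinimumPrincipleAt.sum_hMeasure_le_one_of_pairwiseDisjoint (hd : 3 ≤ d) {Ω : Set (Euc d)}
    (hΩ : IsOpen Ω) {p : Euc d} (hp : MinimumPrincipleAt Ω p) {ι : Type*} {S : Finset ι}
    {E : ι → Set (Euc d)} {z : ι → Euc d} {r : ι → ℝ} (hr : ∀ i ∈ S, 0 < r i)
    (hE : ∀ i ∈ S, E i ⊆ closedBall (z i) (r i))
    (hdisj : (S : Set ι).PairwiseDisjoint fun i => ball (z i) (2 * r i)) :
    ∑ i ∈ S, hMeasure Ω p (E i) ≤ 1 := by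
  refine hp.sum_hMeasure_le_one (φ := fun i => kernelCutoff (z i) (r i))
    (fun i hi => resolutiveAt_kernelCutoff hd hΩ (hr i hi) (z i) p) (fun i hi x => ?_) fun x => ?_
  · by_cases hx : x ∈ E i
    · rw [indicator_of_mem hx, kernelCutoff_eq_one (hr i hi) (hE i hi hx)]
    · rw [indicator_of_notMem hx]
      exact (kernelCutoff_mem_Icc (hr i hi) (z i) x).1
  · by_cases h : ∃ i ∈ S, x ∈ ball (z i) (2 * r i)
    · obtain ⟨i, hi, hx⟩ := h
      rw [Finset.sum_eq_single_of_mem i hi]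
      · exact (kernelCutoff_mem_Icc (hr i hi) (z i) x).2
      · exact fun j hj hji => kernelCutoff_eq_zero (hr j hj) <| not_lt.1 fun hxj =>
          disjoint_left.1 (hdisj hj hi hji) hxj hx
    · rw [Finset.sum_eq_zero fun i hi => kernelCutoff_eq_zero (hr i hi) <|
        not_lt.1 fun hx => h ⟨i, hi, hx⟩]
      exact zero_le_one

end KernelCutoff

section AhlforsRegularity

variable {E : Type*} [NormedAddCommGroup E] [NormedSpace ℝ E] [FiniteDimensional ℝ E] {x : E}

lemma card_le_five_pow_finrank_of_isSeparated {ε : NNReal} (hε : 0 < ε) {s : Finset E}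
    (hsx : (s : Set E) ⊆ closedBall x (2 * ε)) (hs : IsSeparated ε (s : Set E)) :
    s.card ≤ 5 ^ Module.finrank ℝ E := by
  classical
  have hε' : (0 : ℝ) < ε := hε
  have hinj : Function.Injective fun c : E => (ε : ℝ)⁻¹ • (c - x) :=
    (smul_right_injective E (inv_ne_zero hε'.ne')).comp (sub_left_injective (b := x))
  rw [← Finset.card_image_of_injective s hinj]
  refine Besicovitch.card_le_of_separated _ (Finset.forall_mem_image.2 fun a ha => ?_)
    (Finset.forall_mem_image.2 fun a ha => Finset.forall_mem_image.2 fun b hb hne => ?_)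
  · rw [norm_smul, norm_inv, Real.norm_of_nonneg hε'.le, ← dist_eq_norm, inv_mul_le_iff₀ hε',
      mul_comm]
    exact hsx ha
  · have hab : (ε : ENNReal) < edist a b := hs ha hb fun h => hne (by rw [h])
    rw [edist_nndist, ENNReal.coe_lt_coe, ← NNReal.coe_lt_coe, coe_nndist] at hab
    rw [← smul_sub, sub_sub_sub_cancel_right, norm_smul, norm_inv, Real.norm_of_nonneg hε'.le,
      ← dist_eq_norm, le_inv_mul_iff₀ hε', mul_one]
    exact hab.le

lemma packingNumber_le_five_pow_finrank {ε : NNReal} (hε : 0 < ε) {A : Set E}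
    (hA : A ⊆ closedBall x (2 * ε)) : packingNumber ε A ≤ 5 ^ Module.finrank ℝ E := by
  refine iSup₂_le fun C hC => iSup_le fun hsep => le_of_not_gt fun hlt => ?_
  obtain ⟨t, htC, ht⟩ := exists_subset_encard_eq (Order.add_one_le_of_lt hlt)
  lift t to Finset E using
    finite_of_encard_eq_coe (k := 5 ^ Module.finrank ℝ E + 1) (by simpa using ht)
  have hcard := card_le_five_pow_finrank_of_isSeparated hε (htC.trans (hC.trans hA))
    (hsep.mono htC)
  rw [encard_coe_eq_coe_finsetCard] at ht
  have hcard' : t.card = 5 ^ Module.finrank ℝ E + 1 := by exact_mod_cast ht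
  lia

lemma exists_finset_subset_iUnion_ball {D : ℝ} (hD : 0 < D) {A : Set E} (hA : A ⊆ closedBall x D) :
    ∃ t : Finset E, (t : Set E) ⊆ A ∧ t.card ≤ 5 ^ Module.finrank ℝ E ∧ A ⊆ ⋃ y ∈ t, ball y D := by
  lift D to NNReal using hD.le
  have hnum : coveringNumber (D / 2) A ≤ 5 ^ Module.finrank ℝ E :=
    (coveringNumber_le_packingNumber _ _).trans
      (packingNumber_le_five_pow_finrank (half_pos hD) (hA.trans (closedBall_subset_closedBall
        (by push_cast; linarith))))
  have htop : coveringNumber (D / 2) A ≠ ⊤ := ne_top_of_le_ne_top (by simp) hnum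
  obtain ⟨t, htA, htfin, hcover, htcard⟩ := exists_set_encard_eq_coveringNumber htop
  lift t to Finset E using htfin
  refine ⟨t, htA, ?_, fun y hy => ?_⟩
  · rw [← htcard, encard_coe_eq_coe_finsetCard] at hnum
    exact_mod_cast hnum
  · obtain ⟨z, hz, hyz⟩ := mem_iUnion₂.1 (isCover_iff_subset_iUnion_closedBall.1 hcover hy)
    refine mem_iUnion₂.2 ⟨z, hz, mem_ball.2 ((mem_closedBall.1 hyz).trans_lt ?_)⟩
    push_cast
    linarith

/-- The upper half of `n`-Ahlfors regularity of `μ` on `F`, at all scales: `μ(F ∩ B(x,r)) ≤ C rⁿ`,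
with no restriction on `r` in terms of the diameter of `F`. -/
def IsUpperAhlforsRegular {X : Type*} [PseudoMetricSpace X] [MeasurableSpace X] (n : ℕ) (C : ℝ)
    (F : Set X) (μ : Measure X) : Prop :=
  ∀ x ∈ F, ∀ r, 0 < r → μ (F ∩ ball x r) ≤ ENNReal.ofReal (C * r ^ n)

lemma IsUpperAhlforsRegular.mono_measure {X : Type*} [PseudoMetricSpace X] [MeasurableSpace X]
    {n : ℕ} {C : ℝ} {F : Set X} {μ ν : Measure X} (h : IsUpperAhlforsRegular n C F ν)
    (hμν : μ ≤ ν) : IsUpperAhlforsRegular n C F μ :=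
  fun x hx r hr => (hμν _).trans (h x hx r hr)

variable {n : ℕ} {C₀ : ℝ} {F : Set (Euc (n + 1))}

lemma ADRegular.hausdorffMeasure_le (hF : ADRegular n C₀ F) (hn : n ≠ 0)
    (hC₀ : 0 ≤ C₀) (hbdd : Bornology.IsBounded F) :
    μH[n] F ≤ ENNReal.ofReal (5 ^ (n + 1) * (C₀ * diam F ^ n)) := by
  have hdist : ∀ a ∈ F, ∀ b ∈ F, dist a b ≤ diam F := fun a ha b hb =>
    dist_le_diam_of_mem hbdd ha hb
  rcases F.subsingleton_or_nontrivial with hsub | hnt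
  · have := Measure.nullSingletonClass_hausdorff (Euc (n + 1))
      (by positivity : (0 : ℝ) < n)
    rw [hsub.measure_zero]
    exact zero_le
  have hpos : 0 < diam F := diam_pos hnt hbdd
  obtain ⟨x, hx⟩ := hnt.nonempty
  obtain ⟨t, htF, htcard, hcover⟩ :=
    exists_finset_subset_iUnion_ball hpos fun y hy => hdist y hy x hx
  have hle : ENNReal.ofReal (diam F) ≤ ediam F :=
    (ENNReal.ofReal_toReal (isBounded_iff_ediam_ne_top.1 hbdd)).le
  calc μH[n] F ≤ μH[n] (⋃ y ∈ t, F ∩ ball y (diam F)) := by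
        rw [← inter_iUnion₂, inter_eq_left.2 hcover]
    _ ≤ ∑ y ∈ t, μH[n] (F ∩ ball y (diam F)) := measure_biUnion_finset_le _ _
    _ ≤ ∑ _ ∈ t, ENNReal.ofReal (C₀ * diam F ^ n) :=
        Finset.sum_le_sum fun y hy => (hF y (htF hy) _ hpos hle).2
    _ = ENNReal.ofReal (t.card * (C₀ * diam F ^ n)) := by
        rw [Finset.sum_const, nsmul_eq_mul, ENNReal.ofReal_mul (Nat.cast_nonneg _),
          ENNReal.ofReal_natCast]
    _ ≤ ENNReal.ofReal (5 ^ (n + 1) * (C₀ * diam F ^ n)) := by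
        have hcard : (t.card : ℝ) ≤ 5 ^ (n + 1) := by simpa using (Nat.cast_le (α := ℝ)).2 htcard
        gcongr

lemma ADRegular.isUpperAhlforsRegular (hF : ADRegular n C₀ F) (hn : n ≠ 0) (hC₀ : 0 ≤ C₀) :
    IsUpperAhlforsRegular n (5 ^ (n + 1) * C₀) F μH[n] := by
  intro x hx r hr
  rcases le_or_gt (ENNReal.ofReal r) (ediam F) with hle | hlt
  · refine (hF x hx r hr hle).2.trans (ENNReal.ofReal_le_ofReal ?_)
    have h5 : (1 : ℝ) ≤ 5 ^ (n + 1) := one_le_pow₀ (by norm_num)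
    gcongr
    exact le_mul_of_one_le_left hC₀ h5
  · have hbdd : Bornology.IsBounded F := isBounded_iff_ediam_ne_top.2 hlt.ne_top
    have hdiam : diam F ≤ r := ENNReal.toReal_le_of_le_ofReal hr.le hlt.le
    refine (measure_mono inter_subset_left).trans ((hF.hausdorffMeasure_le hn hC₀ hbdd).trans
      (ENNReal.ofReal_le_ofReal ?_))
    rw [mul_assoc]
    gcongr

end AhlforsRegularity

section DyadicCubes

variable {n : ℕ} {F : Set (Euc (n + 1))} {μ : Measure (Euc (n + 1))} {Cl : ℝ} {q R : Cube n}
  (L : DSLattice n F μ Cl)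

lemma sideLen_pos (q : Cube n) : 0 < sideLen q := zpow_pos two_pos _

namespace DSLattice

include L in
lemma Cl_pos : 0 < Cl := one_pos.trans_le L.one_le_Cl

lemma center_mem_support (hq : L.mem q) : L.center q.2 ∈ F :=
  L.subset_F _ _ hq (L.center_mem _ _ hq)

lemma dist_center_le (hq : L.mem q) {x : Euc (n + 1)} (hx : x ∈ q.2) :
    dist x (L.center q.2) ≤ sideLen q := by
  have h := (edist_le_ediam_of_mem hx (L.center_mem _ _ hq)).trans (L.diam_le _ _ hq)
  rw [edist_dist] at h
  exact (ENNReal.ofReal_le_ofReal_iff (sideLen_pos q).le).1 h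

lemma measure_pos (hq : L.mem q) : 0 < μ q.2 :=
  (ENNReal.ofReal_pos.2 (mul_pos (inv_pos.2 L.Cl_pos) (pow_pos (sideLen_pos q) n))).trans_le
    (L.measure_lb _ _ hq)

lemma measure_ne_top (hq : L.mem q) : μ q.2 ≠ ⊤ :=
  ne_top_of_le_ne_top ENNReal.ofReal_ne_top (L.measure_ub _ _ hq)

lemma toReal_measure_pos (hq : L.mem q) : 0 < (μ q.2).toReal :=
  ENNReal.toReal_pos (L.measure_pos hq).ne' (L.measure_ne_top hq)

lemma sideLen_pow_le (hq : L.mem q) : sideLen q ^ n ≤ Cl * (μ q.2).toReal := by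
  rw [← inv_mul_le_iff₀ L.Cl_pos]
  exact (ENNReal.ofReal_le_iff_le_toReal (L.measure_ne_top hq)).1 (L.measure_lb _ _ hq)

lemma sideLen_le (hn : n ≠ 0) (hq : L.mem q) (hR : L.mem R) (hqR : q.2 ⊆ R.2) :
    sideLen q ≤ max 1 (Cl * (μ R.2).toReal) := by
  rcases le_total (sideLen q) 1 with h | h
  · exact h.trans (le_max_left _ _)
  · refine le_max_of_le_right ?_
    calc sideLen q ≤ sideLen q ^ n := le_self_pow₀ h hn
      _ ≤ Cl * (μ q.2).toReal := L.sideLen_pow_le hq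
      _ ≤ Cl * (μ R.2).toReal := mul_le_mul_of_nonneg_left
          (ENNReal.toReal_mono (L.measure_ne_top hR) (measure_mono hqR)) L.Cl_pos.le

lemma subset_dilCube (hq : L.mem q) {lam : ℝ} (hlam : 1 ≤ lam) : q.2 ⊆ dilCube F lam q :=
  fun _ hx => ⟨L.subset_F _ _ hq hx, by
    rw [infDist_zero_of_mem hx]
    exact mul_nonneg (sub_nonneg.2 hlam) (sideLen_pos q).le⟩

lemma dilCube_subset (hq : L.mem q) (lam : ℝ) :
    dilCube F lam q ⊆ F ∩ closedBall (L.center q.2) (lam * sideLen q) := by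
  refine fun x hx => ⟨hx.1, mem_closedBall.2 (le_of_forall_pos_le_add fun ε hε => ?_)⟩
  obtain ⟨y, hy, hxy⟩ := (infDist_lt_iff (L.nonempty _ _ hq)).1
    (hx.2.trans_lt (lt_add_of_pos_right _ hε))
  linarith [L.dist_center_le hq hy, dist_triangle x y (L.center q.2)]

section UpperRegular

variable {C lam : ℝ} (hμ : IsUpperAhlforsRegular n C F μ)
include hμ

lemma measure_dilCube_le (hq : L.mem q) (hlam : 0 ≤ lam) :
    μ (dilCube F lam q) ≤ ENNReal.ofReal (C * ((lam + 1) * sideLen q) ^ n) := by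
  have hℓ := sideLen_pos q
  refine (measure_mono fun x hx => ?_).trans
    (hμ _ (L.center_mem_support hq) _ (mul_pos (by linarith) hℓ))
  obtain ⟨hxF, hx⟩ := L.dilCube_subset hq lam hx
  exact ⟨hxF, mem_ball.2 (by linarith [mem_closedBall.1 hx])⟩

lemma measure_dilCube_ne_top (hq : L.mem q) (hlam : 0 ≤ lam) : μ (dilCube F lam q) ≠ ⊤ :=
  ne_top_of_le_ne_top ENNReal.ofReal_ne_top (L.measure_dilCube_le hμ hq hlam)

lemma toReal_measure_le_dilCube (hq : L.mem q) (hlam : 1 ≤ lam) :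
    (μ q.2).toReal ≤ (μ (dilCube F lam q)).toReal :=
  ENNReal.toReal_mono (L.measure_dilCube_ne_top hμ hq (zero_le_one.trans hlam))
    (measure_mono (L.subset_dilCube hq hlam))

lemma toReal_measure_dilCube_le (hC : 0 ≤ C) (hq : L.mem q) (hlam : 0 ≤ lam) :
    (μ (dilCube F lam q)).toReal ≤ C * (lam + 1) ^ n * Cl * (μ q.2).toReal := by
  have hℓ := sideLen_pos q
  calc (μ (dilCube F lam q)).toReal ≤ C * ((lam + 1) * sideLen q) ^ n :=
        ENNReal.toReal_le_of_le_ofReal (by positivity) (L.measure_dilCube_le hμ hq hlam)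
    _ = C * (lam + 1) ^ n * sideLen q ^ n := by rw [mul_pow, mul_assoc]
    _ ≤ C * (lam + 1) ^ n * (Cl * (μ q.2).toReal) :=
        mul_le_mul_of_nonneg_left (L.sideLen_pow_le hq) (by positivity)
    _ = C * (lam + 1) ^ n * Cl * (μ q.2).toReal := (mul_assoc _ _ _).symm

end UpperRegular

/-- The radii `4ℓ(q) = 2 · 2ℓ(q)` are those for which the harmonic measures of the cubes `2q` are
superadditive; `21 > 5 · 4` makes the enlarged balls open. -/
lemma exists_disjoint_subfamily_covering {T : Set (Cube n)} {M : ℝ} (hT : ∀ q ∈ T, L.mem q)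
    (hM : ∀ q ∈ T, sideLen q ≤ M) :
    ∃ u ⊆ T, u.Countable ∧
      (u.PairwiseDisjoint fun q => closedBall (L.center q.2) (4 * sideLen q)) ∧
      ⋃ q ∈ T, q.2 ⊆ ⋃ q ∈ u, F ∩ ball (L.center q.2) (21 * sideLen q) := by
  obtain ⟨u, huT, hu, hcover⟩ := Vitali.exists_disjoint_subfamily_covering_enlargement_closedBall T
    (fun q => L.center q.2) (fun q => 4 * sideLen q) (4 * M) (fun q hq => by linarith [hM q hq])
    5 (by norm_num)
  have hpos := fun q : Cube n => mul_pos (four_pos (α := ℝ)) (sideLen_pos q)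
  refine ⟨u, huT, hu.countable_of_nonempty_interior fun q _ =>
    (nonempty_ball.2 (hpos q)).mono ball_subset_interior_closedBall, hu, iUnion₂_subset ?_⟩
  intro q hq x hx
  obtain ⟨b, hb, hqb⟩ := hcover q hq
  have hxb : dist x (L.center b.2) ≤ 5 * (4 * sideLen b) := mem_closedBall.1 <| hqb <|
    mem_closedBall.2 <| by linarith [L.dist_center_le (hT q hq) hx, sideLen_pos q]
  exact mem_iUnion₂.2 ⟨b, hb, L.subset_F _ _ (hT q hq) hx,
    mem_ball.2 (by linarith [sideLen_pos b])⟩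

end DSLattice

variable {L}

lemma MaximalWith.disjoint_of_lt {P : Cube n → Prop} (hP : ∀ q, P q → L.mem q) {q q' : Cube n}
    (h : MaximalWith L P q) (h' : MaximalWith L P q') (hlt : q.1 < q'.1) : Disjoint q.2 q'.2 :=
  disjoint_left.2 fun _ hx hx' => h'.2 q (hP q h.1) hlt
    (L.nested _ _ hlt.le _ (hP q' h'.1) _ (hP q h.1) ⟨_, hx', hx⟩) h.1

lemma pairwiseDisjoint_maximalWith {P : Cube n → Prop} (hP : ∀ q, P q → L.mem q) :
    {q | MaximalWith L P q}.PairwiseDisjoint Prod.snd := by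
  rintro q h q' h' hne
  rcases lt_trichotomy q.1 q'.1 with hlt | heq | hgt
  · exact h.disjoint_of_lt hP h' hlt
  · have hq' : q'.2 ∈ L.cube q.1 := heq ▸ hP q' h'.1
    exact L.disj _ _ (hP q h.1) _ hq' fun h2 => hne (Prod.ext heq h2)
  · exact (h'.disjoint_of_lt hP h hgt).symm

end DyadicCubes

section LowDensity

lemma WeakAInftyBallWith.exists_forall_hMeasure_le {n : ℕ} {Ω : Set (Euc (n + 1))}
    {p x₀ : Euc (n + 1)} {r₀ : ℝ} {D : ℝ → ℝ} (hw : WeakAInftyBallWith n Ω p x₀ r₀ D)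
    (hp : MinimumPrincipleAt Ω p) (hpos : μH[n] (ball x₀ r₀ ∩ frontier Ω) ≠ 0) {ε : ℝ}
    (hε : 0 < ε) :
    ∃ δ ≠ 0, ∀ A, MeasurableSet A → A ⊆ ball x₀ r₀ ∩ frontier Ω → μH[n] A ≤ δ →
      hMeasure Ω p A ≤ ε := by
  obtain ⟨hD, hDle⟩ := hw (min ε (1 / 2))
    ⟨lt_min hε one_half_pos, (min_le_right _ _).trans_lt one_half_lt_one⟩
  refine ⟨_, mul_ne_zero (ENNReal.ofReal_pos.2 hD.1).ne' hpos, fun A hA hAB hAδ => ?_⟩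
  calc hMeasure Ω p A ≤ min ε (1 / 2) * hMeasure Ω p (ball x₀ (2 * r₀)) := hDle A hA hAB hAδ
    _ ≤ min ε (1 / 2) := mul_le_of_le_one_right (le_min hε.le one_half_pos.le)
        (hp.hMeasure_le_one _)
    _ ≤ ε := min_le_left _ _

/-- Harmonic measure is only known to be finitely subadditive; absolute continuity takes care of
the tail of the union. -/
lemma MinimumPrincipleAt.hMeasure_iUnion_le_mul {d : ℕ} {Ω : Set (Euc d)} {p : Euc d}
    (hp : MinimumPrincipleAt Ω p) {μ : Measure (Euc d)} {ι : Type*} [Countable ι]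
    {E : ι → Set (Euc d)} (hm : ∀ i, MeasurableSet (E i))
    (hd : Pairwise (Function.onFun Disjoint E)) (hfin : μ (⋃ i, E i) ≠ ⊤)
    (hac : ∀ ε > 0, ∃ δ ≠ 0, ∀ A, MeasurableSet A → A ⊆ ⋃ i, E i → μ A ≤ δ → hMeasure Ω p A ≤ ε)
    {κ : ℝ} (hκ : 0 ≤ κ) (hle : ∀ i, hMeasure Ω p (E i) ≤ κ * (μ (E i)).toReal) :
    hMeasure Ω p (⋃ i, E i) ≤ κ * (μ (⋃ i, E i)).toReal := by
  refine le_of_forall_pos_le_add fun ε hε => ?_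
  obtain ⟨δ, hδ, htail⟩ := hac ε hε
  have hsum : ∑' i, μ (E i) ≠ ⊤ := by rwa [← measure_iUnion hd hm]
  obtain ⟨S, hS⟩ := ((ENNReal.tendsto_tsum_compl_atTop_zero hsum).eventually
    (gt_mem_nhds (pos_iff_ne_zero.2 hδ))).exists
  have hhead : ∑ i ∈ S, (μ (E i)).toReal ≤ (μ (⋃ i, E i)).toReal := by
    have := measureReal_biUnion_finset (μ := μ) (s := S) (hd.set_pairwise _) (fun i _ => hm i)
      (fun i _ => ne_top_of_le_ne_top hfin (measure_mono (subset_iUnion E i)))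
    refine this.ge.trans (ENNReal.toReal_mono hfin (measure_mono ?_))
    exact iUnion₂_subset fun i _ => subset_iUnion E i
  have hcover : ⋃ i, E i ⊆ (⋃ i ∈ S, E i) ∪ ⋃ i : {i // i ∉ S}, E i := by
    refine iUnion_subset fun i x hx => ?_
    by_cases hi : i ∈ S
    · exact Or.inl (mem_iUnion₂.2 ⟨i, hi, hx⟩)
    · exact Or.inr (mem_iUnion.2 ⟨⟨i, hi⟩, hx⟩)
  have hrest : hMeasure Ω p (⋃ i : {i // i ∉ S}, E i) ≤ ε :=
    htail _ (MeasurableSet.iUnion fun i => hm i) (iUnion_subset fun i => subset_iUnion E i)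
      ((measure_iUnion_le _).trans hS.le)
  calc hMeasure Ω p (⋃ i, E i)
      ≤ hMeasure Ω p (⋃ i ∈ S, E i) + hMeasure Ω p (⋃ i : {i // i ∉ S}, E i) :=
        (hp.hMeasure_mono hcover).trans (hp.hMeasure_union_le _ _)
    _ ≤ ∑ i ∈ S, hMeasure Ω p (E i) + ε := add_le_add (hp.hMeasure_biUnion_le S E) hrest
    _ ≤ ∑ i ∈ S, κ * (μ (E i)).toReal + ε := by gcongr with i _; exact hle i
    _ = κ * ∑ i ∈ S, (μ (E i)).toReal + ε := by rw [Finset.mul_sum]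
    _ ≤ κ * (μ (⋃ i, E i)).toReal + ε := by gcongr

lemma countable_of_pairwiseDisjoint_snd {n : ℕ} {F : Set (Euc (n + 1))}
    {μ : Measure (Euc (n + 1))} {Cl : ℝ} (L : DSLattice n F μ Cl) {T : Set (Cube n)}
    (hT : ∀ q ∈ T, L.mem q) (hd : T.PairwiseDisjoint Prod.snd) (hfin : μ (⋃ q ∈ T, q.2) ≠ ⊤) :
    T.Countable := by
  have hcount := Measure.countable_meas_pos_of_disjoint_of_meas_iUnion_ne_top μ
    (As := fun q : T => q.1.2) (fun q => L.measurableSet _ _ (hT q q.2))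
    (hd.on_injective Subtype.val_injective fun q => q.2)
    (by rwa [← biUnion_eq_iUnion T fun q _ => q.2])
  rw [← countable_coe_iff, ← countable_univ_iff]
  exact hcount.mono fun q _ => L.measure_pos (hT q q.2)

lemma MinimumPrincipleAt.hMeasure_BLset_le {n : ℕ} {Ω : Set (Euc (n + 1))} {p : Euc (n + 1)}
    (hp : MinimumPrincipleAt Ω p) {Cl : ℝ}
    {μ : Measure (Euc (n + 1))} (hμ : μ = (μH[n]).restrict (frontier Ω))
    (L : DSLattice n (frontier Ω) μ Cl) {R₀ : Cube n} (hR : L.mem R₀) {D : ℝ → ℝ}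
    (hw : WeakAInftyBallWith n Ω p (L.center R₀.2) (4 * sideLen R₀) D) {A : ℝ} (hA : 0 < A) :
    hMeasure Ω p (BLset Ω μ L p R₀ A) ≤ A⁻¹ * hMeasure Ω p R₀.2 := by
  let T := LDfam Ω μ L p R₀ A
  have hmem : ∀ q ∈ T, L.mem q := fun q hq => hq.1.1
  have hBL : BLset Ω μ L p R₀ A = ⋃ q : T, q.1.2 := biUnion_eq_iUnion T fun q _ => q.2
  have hsub : ⋃ q : T, q.1.2 ⊆ R₀.2 := iUnion_subset fun q => q.2.1.2.1
  have hfin : μ (⋃ q : T, q.1.2) ≠ ⊤ :=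
    ne_top_of_le_ne_top (L.measure_ne_top hR) (measure_mono hsub)
  have hdisj : T.PairwiseDisjoint Prod.snd := pairwiseDisjoint_maximalWith fun q h => h.1
  have : Countable T := countable_coe_iff.2 <|
    countable_of_pairwiseDisjoint_snd L hmem hdisj (by rwa [biUnion_eq_iUnion T fun q _ => q.2])
  have hRball : R₀.2 ⊆ ball (L.center R₀.2) (4 * sideLen R₀) ∩ frontier Ω := fun x hx =>
    ⟨mem_ball.2 (by linarith [L.dist_center_le hR hx, sideLen_pos R₀]), L.subset_F _ _ hR hx⟩
  have hpos : μH[n] (ball (L.center R₀.2) (4 * sideLen R₀) ∩ frontier Ω) ≠ 0 :=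
    ((L.measure_pos hR).trans_le ((hμ.trans_le Measure.restrict_le_self _).trans
      (measure_mono hRball))).ne'
  have hκ : 0 ≤ A⁻¹ * (hMeasure Ω p R₀.2 / (μ R₀.2).toReal) :=
    mul_nonneg (inv_nonneg.2 hA.le) (div_nonneg (hp.hMeasure_nonneg _) ENNReal.toReal_nonneg)
  calc hMeasure Ω p (BLset Ω μ L p R₀ A)
      ≤ A⁻¹ * (hMeasure Ω p R₀.2 / (μ R₀.2).toReal) * (μ (⋃ q : T, q.1.2)).toReal := by
        rw [hBL]
        refine hp.hMeasure_iUnion_le_mul (ι := T) (fun q => L.measurableSet _ _ (hmem q q.2))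
          (hdisj.on_injective Subtype.val_injective fun q => q.2) hfin (fun ε hε => ?_) hκ
          fun q => (div_le_iff₀ (L.toReal_measure_pos (hmem q q.2))).1 q.2.1.2.2
        obtain ⟨δ, hδ, h⟩ := hw.exists_forall_hMeasure_le hp hpos hε
        refine ⟨δ, hδ, fun E hE hEU hEδ => ?_⟩
        have hER := hEU.trans (hsub.trans hRball)
        exact h E hE hER <| by
          rwa [hμ, Measure.restrict_eq_self _ (hER.trans inter_subset_right)] at hEδ
    _ ≤ A⁻¹ * (hMeasure Ω p R₀.2 / (μ R₀.2).toReal) * (μ R₀.2).toReal :=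
        mul_le_mul_of_nonneg_left (ENNReal.toReal_mono (L.measure_ne_top hR) (measure_mono hsub)) hκ
    _ = A⁻¹ * hMeasure Ω p R₀.2 := by
        rw [mul_assoc, div_mul_cancel₀ _ (L.toReal_measure_pos hR).ne']

end LowDensity

section HighDensity

variable {n : ℕ} {Ω : Set (Euc (n + 1))} {p : Euc (n + 1)} {μ : Measure (Euc (n + 1))} {Cl C : ℝ}

lemma MinimumPrincipleAt.sum_hMeasure_dilCube_two_le_one (hn : 2 ≤ n) (hΩ : IsOpen Ω)
    (hp : MinimumPrincipleAt Ω p) {F : Set (Euc (n + 1))} (L : DSLattice n F μ Cl)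
    {S : Finset (Cube n)} (hS : ∀ q ∈ S, L.mem q)
    (hd : (S : Set (Cube n)).PairwiseDisjoint fun q => closedBall (L.center q.2) (4 * sideLen q)) :
    ∑ q ∈ S, hMeasure Ω p (dilCube F 2 q) ≤ 1 := by
  refine hp.sum_hMeasure_le_one_of_pairwiseDisjoint (by lia) hΩ
    (z := fun q => L.center q.2) (r := fun q => 2 * sideLen q)
    (fun q _ => mul_pos two_pos (sideLen_pos q))
    (fun q hq => (L.dilCube_subset (hS q hq) 2).trans inter_subset_right) fun q hq q' hq' hne => ?_
  refine (hd hq hq' hne).mono ?_ ?_ <;>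
    exact ball_subset_closedBall.trans (closedBall_subset_closedBall (by linarith))

lemma MinimumPrincipleAt.measure_biUnion_le_of_measure_dilCube_le (hn : 2 ≤ n) (hΩ : IsOpen Ω)
    (hp : MinimumPrincipleAt Ω p) {F : Set (Euc (n + 1))} (L : DSLattice n F μ Cl)
    (hμ : IsUpperAhlforsRegular n C F μ) (hC : 0 ≤ C) {T : Set (Cube n)} (hT : ∀ q ∈ T, L.mem q)
    {M : ℝ} (hM : ∀ q ∈ T, sideLen q ≤ M) {K : ℝ} (hK : 0 ≤ K)
    (hTK : ∀ q ∈ T, (μ (dilCube F 2 q)).toReal ≤ K * hMeasure Ω p (dilCube F 2 q)) :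
    μ (⋃ q ∈ T, q.2) ≤ ENNReal.ofReal (C * 21 ^ n * Cl * K) := by
  obtain ⟨u, huT, hcount, hdisj, hcover⟩ := L.exists_disjoint_subfamily_covering hT hM
  have hCl := L.Cl_pos
  have hball : ∀ q ∈ u, C * (21 * sideLen q) ^ n ≤
      C * 21 ^ n * Cl * K * hMeasure Ω p (dilCube F 2 q) := fun q hq =>
    calc C * (21 * sideLen q) ^ n = C * 21 ^ n * sideLen q ^ n := by rw [mul_pow, mul_assoc]
      _ ≤ C * 21 ^ n * (Cl * (K * hMeasure Ω p (dilCube F 2 q))) := by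
          gcongr
          refine (L.sideLen_pow_le (hT q (huT hq))).trans (mul_le_mul_of_nonneg_left ?_ hCl.le)
          exact (L.toReal_measure_le_dilCube hμ (hT q (huT hq)) one_le_two).trans (hTK q (huT hq))
      _ = C * 21 ^ n * Cl * K * hMeasure Ω p (dilCube F 2 q) := by ring
  have hsum : ∀ S : Finset u, ∑ q ∈ S, ENNReal.ofReal (C * (21 * sideLen q.1) ^ n) ≤
      ENNReal.ofReal (C * 21 ^ n * Cl * K) := by
    intro S
    have hω := hp.sum_hMeasure_dilCube_two_le_one hn hΩ L
      (S := S.map (Function.Embedding.subtype _)) (by simpa using fun j Q h _ => hT (j, Q) (huT h))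
      (hdisj.subset (by simp))
    rw [Finset.sum_map] at hω
    rw [← ENNReal.ofReal_sum_of_nonneg fun q _ => by have := sideLen_pos q.1; positivity]
    refine ENNReal.ofReal_le_ofReal ((Finset.sum_le_sum fun (q : u) _ => hball q q.2).trans ?_)
    rw [← Finset.mul_sum]
    exact mul_le_of_le_one_right (by positivity) hω
  calc μ (⋃ q ∈ T, q.2) ≤ μ (⋃ q ∈ u, F ∩ ball (L.center q.2) (21 * sideLen q)) :=
        measure_mono hcover
    _ ≤ ∑' q : u, μ (F ∩ ball (L.center q.1.2) (21 * sideLen q.1)) :=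
        measure_biUnion_le μ hcount _
    _ ≤ ∑' q : u, ENNReal.ofReal (C * (21 * sideLen q.1) ^ n) :=
        ENNReal.tsum_le_tsum fun q => hμ _ (L.center_mem_support (hT q (huT q.2))) _
          (mul_pos (by norm_num) (sideLen_pos q.1))
    _ ≤ ENNReal.ofReal (C * 21 ^ n * Cl * K) := by
        rw [ENNReal.tsum_eq_iSup_sum]
        exact iSup_le hsum

lemma HDcond.toReal_measure_dilCube_le {L : DSLattice n (frontier Ω) μ Cl} {R₀ q : Cube n}
    {A c' : ℝ}
    (hq : HDcond Ω μ L p R₀ A q) (hp : MinimumPrincipleAt Ω p)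
    (hμ : IsUpperAhlforsRegular n C (frontier Ω) μ) (hC : 0 ≤ C) (hR : L.mem R₀) (hc' : 0 < c')
    (hω : c' ≤ hMeasure Ω p R₀.2) (hA : 0 < A) :
    (μ (dilCube (frontier Ω) 2 q)).toReal ≤
      C * 3 ^ n * Cl * (μ R₀.2).toReal / (A * c') * hMeasure Ω p (dilCube (frontier Ω) 2 q) := by
  have hpos : ∀ Q : Cube n, L.mem Q → 0 < (μ (dilCube (frontier Ω) 2 Q)).toReal := fun Q hQ =>
    (L.toReal_measure_pos hQ).trans_le (L.toReal_measure_le_dilCube hμ hQ one_le_two)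
  have hdens := hq.2.2
  rw [dens, dens, ← mul_div_assoc, div_le_div_iff₀ (hpos R₀ hR) (hpos q hq.1)] at hdens
  rw [div_mul_eq_mul_div, le_div_iff₀ (mul_pos hA hc')]
  have hω₂ : c' ≤ hMeasure Ω p (dilCube (frontier Ω) 2 R₀) :=
    hω.trans (hp.hMeasure_mono (L.subset_dilCube hR one_le_two))
  have hR₂ : (μ (dilCube (frontier Ω) 2 R₀)).toReal ≤ C * 3 ^ n * Cl * (μ R₀.2).toReal :=
    (L.toReal_measure_dilCube_le hμ hC hR zero_le_two).trans_eq (by norm_num)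
  calc (μ (dilCube (frontier Ω) 2 q)).toReal * (A * c')
      ≤ (μ (dilCube (frontier Ω) 2 q)).toReal * (A * hMeasure Ω p (dilCube (frontier Ω) 2 R₀)) := by
        gcongr
    _ ≤ hMeasure Ω p (dilCube (frontier Ω) 2 q) * (μ (dilCube (frontier Ω) 2 R₀)).toReal := by
        rwa [mul_comm]
    _ ≤ hMeasure Ω p (dilCube (frontier Ω) 2 q) * (C * 3 ^ n * Cl * (μ R₀.2).toReal) :=
        mul_le_mul_of_nonneg_left hR₂ (hp.hMeasure_nonneg _)
    _ = C * 3 ^ n * Cl * (μ R₀.2).toReal * hMeasure Ω p (dilCube (frontier Ω) 2 q) :=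
        mul_comm _ _

lemma MinimumPrincipleAt.measure_BHset_le (hn : 2 ≤ n) (hΩ : IsOpen Ω)
    (hp : MinimumPrincipleAt Ω p) (L : DSLattice n (frontier Ω) μ Cl)
    (hμ : IsUpperAhlforsRegular n C (frontier Ω) μ) (hC : 0 ≤ C) {R₀ : Cube n} (hR : L.mem R₀)
    {c' : ℝ} (hc' : 0 < c') (hω : c' ≤ hMeasure Ω p R₀.2) {A : ℝ} (hA : 0 < A) :
    μ (BHset Ω μ L p R₀ A) ≤ ENNReal.ofReal (63 ^ n * (C * Cl) ^ 2 / c' / A) * μ R₀.2 := by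
  have hCl := L.Cl_pos
  calc μ (BHset Ω μ L p R₀ A)
      ≤ ENNReal.ofReal (C * 21 ^ n * Cl * (C * 3 ^ n * Cl * (μ R₀.2).toReal / (A * c'))) :=
        hp.measure_biUnion_le_of_measure_dilCube_le hn hΩ L hμ hC (fun q hq => hq.1.1)
          (fun q hq => L.sideLen_le (by lia) hq.1.1 hR hq.1.2.1) (by positivity)
          fun q hq => hq.1.toReal_measure_dilCube_le hp hμ hC hR hc' hω hA
    _ = ENNReal.ofReal (63 ^ n * (C * Cl) ^ 2 / c' / A * (μ R₀.2).toReal) := by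
        rw [show (63 : ℝ) = 21 * 3 by norm_num, mul_pow]
        congr 1
        field_simp
    _ = ENNReal.ofReal (63 ^ n * (C * Cl) ^ 2 / c' / A) * μ R₀.2 := by
        rw [ENNReal.ofReal_mul (by positivity), ENNReal.ofReal_toReal (L.measure_ne_top hR)]

end HighDensity

theorem high_low_density_estimates_general {n : ℕ} (hn : 2 ≤ n) {C₀ Cl c' : ℝ} (hC₀ : 0 < C₀)
    (hCl : 0 < Cl) (hc' : 0 < c') :
    ∃ C : ℝ, 0 < C ∧ ∀ Ω : Set (Euc (n + 1)), IsOpen Ω →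
      IsUpperAhlforsRegular n C₀ (frontier Ω) μH[n] →
      ∀ μ : Measure (Euc (n + 1)), μ = (μH[n]).restrict (frontier Ω) →
      ∀ (L : DSLattice n (frontier Ω) μ Cl) (R₀ : Cube n), L.mem R₀ →
      ∀ p ∈ Ω, c' ≤ hMeasure Ω p R₀.2 → ∀ A : ℝ, 0 < A →
        μ (BHset Ω μ L p R₀ A) ≤ ENNReal.ofReal (C / A) * μ R₀.2 ∧
        ∀ D : ℝ → ℝ, WeakAInftyBallWith n Ω p (L.center R₀.2) (4 * sideLen R₀) D →
          hMeasure Ω p (BLset Ω μ L p R₀ A) ≤ A⁻¹ * hMeasure Ω p R₀.2 := by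
  refine ⟨63 ^ n * (C₀ * Cl) ^ 2 / c', by positivity, ?_⟩
  intro Ω hΩ hreg μ hμ L R₀ hR p _ hω A hA
  have hp : MinimumPrincipleAt Ω p := minimumPrincipleAt_of_hMeasure_pos (hc'.trans_le hω)
  exact ⟨hp.measure_BHset_le hn hΩ L (hreg.mono_measure (hμ.trans_le Measure.restrict_le_self))
    hC₀.le hR hc' hω hA, fun D hw => hp.hMeasure_BLset_le hμ L hR hw hA⟩

/-- Under the standing assumptions, `μ(B_H) ≤ C A⁻¹ μ(R₀)`, with `C`
depending only on `n`, the AD-regularity and lattice constants and `c'`, and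
`ω^p(B_L) ≤ A⁻¹ ω^p(R₀)`. -/
theorem high_low_density_estimates
    (n : ℕ) (hn : 2 ≤ n) (C₀ Cl c c' : ℝ) (hC₀ : 1 ≤ C₀) (hCl : 1 ≤ Cl)
    (hc : 0 < c) (hc' : 0 < c') :
    ∃ C : ℝ, 0 < C ∧
      ∀ D : ℝ → ℝ,
      ∀ (F : Set (Euc (n+1))), IsClosed F → ADRegular n C₀ F →
      ∀ Ω : Set (Euc (n+1)), Ω = Fᶜ → frontier Ω = F →
      ∀ μ : Measure (Euc (n+1)), μ = (μH[n]).restrict (frontier Ω) →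
      ∀ (L : DSLattice n (frontier Ω) μ Cl) (R₀ : Cube n) (p : Euc (n+1)),
        L.mem R₀ → p ∈ Ω → p ∉ cubeBall L 4 R₀ →
        c * sideLen R₀ ≤ infDist p (frontier Ω) →
        infDist p (frontier Ω) ≤ infDist p R₀.2 →
        infDist p R₀.2 ≤ c⁻¹ * sideLen R₀ →
        c' ≤ hMeasure Ω p R₀.2 →
        WeakAInftyBallWith n Ω p (L.center R₀.2) (4 * sideLen R₀) D →
      ∀ A : ℝ, 1 ≤ A →
        μ (BHset Ω μ L p R₀ A) ≤ ENNReal.ofReal (C / A) * μ R₀.2 ∧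
        hMeasure Ω p (BLset Ω μ L p R₀ A) ≤ A⁻¹ * hMeasure Ω p R₀.2 := by
  obtain ⟨C, hC, h⟩ := high_low_density_estimates_general hn
    (mul_pos (pow_pos (by norm_num : (0 : ℝ) < 5) (n + 1)) (one_pos.trans_le hC₀))
    (one_pos.trans_le hCl) hc'
  refine ⟨C, hC, fun D F hF hAD Ω hΩ hfr μ hμ L R₀ p hR hp _ _ _ _ hω hw A hA => ?_⟩
  have hreg := (hfr ▸ hAD).isUpperAhlforsRegular (by lia) (zero_le_one.trans hC₀)
  exact (h Ω (hΩ ▸ hF.isOpen_compl) hreg μ hμ L R₀ hR p hp hω A (one_pos.trans_le hA)).imp_right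
    fun hBL => hBL D hw

end HarmMeas
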